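/- arXiv:1006.5097 — 8 statements merged into one kernel-verified Lean document; each statement's English description precedes it below -/
import Mathlib

section
/- There exists an infinite color sequence x : ℕ → Fin 3 that is balanced but not bounded; hence the converse of the implication 'bounded ⇒ balanced' fails. -/
open Filter Topology

/-- Number of indices `i < n` with `x i = a`. -/
def cnt {k : ℕ} (x : ℕ → Fin k) (a : Fin k) (n : ℕ) : ℕ :=
  ((Finset.range n).filter fun i => x i = a).card

/-- `diff_{a,b}(x^{≤n})`. -/
def diffSeq {k : ℕ} (x : ℕ → Fin k) (a b : Fin k) (n : ℕ) : ℤ :=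
  (cnt x a n : ℤ) - (cnt x b n : ℤ)

/-- Bounded difference property. -/
def BoundedSeq {k : ℕ} (x : ℕ → Fin k) : Prop :=
  ∃ C : ℕ, ∀ (a b : Fin k) (n : ℕ), |diffSeq x a b n| ≤ (C : ℤ)

/-- Color `a` has frequency `r` in `x`. -/
def HasFreq {k : ℕ} (x : ℕ → Fin k) (a : Fin k) (r : ℝ) : Prop :=
  Tendsto (fun n : ℕ => (cnt x a n : ℝ) / (n : ℝ)) atTop (𝓝 r)

/-- Every color has frequency `1/k`. -/
def BalancedSeq {k : ℕ} (x : ℕ → Fin k) : Prop :=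
  ∀ a : Fin k, HasFreq x a (1 / (k : ℝ))

/-!
Start from the cyclic sequence `0, 1, …, k - 1, 0, 1, …`, which is bounded and hence balanced, and
repaint its square positions with the color `0`. The squares have density zero, so no frequency
changes. But infinitely many squares carried the color `1`; each of them raises the count of `0`
by one, so the excess of `0` over `1` grows without bound.
-/

section Counting

variable {k : ℕ}

lemma cnt_eq_count (x : ℕ → Fin k) (a : Fin k) (n : ℕ) : cnt x a n = n.count (x · = a) :=
  (Nat.count_eq_card_filter_range _ n).symm

lemma sum_cnt (x : ℕ → Fin k) (n : ℕ) : ∑ a, cnt x a n = n := by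
  simpa only [cnt, Finset.card_range] using
    (Finset.card_eq_sum_card_fiberwise (s := Finset.range n) (f := x)
      (fun i _ => Finset.mem_coe.mpr (Finset.mem_univ (x i)))).symm

lemma cnt_le_cnt_add_count_ne (x y : ℕ → Fin k) (a : Fin k) (n : ℕ) :
    cnt x a n ≤ cnt y a n + n.count (fun i => x i ≠ y i) := by
  rw [cnt, cnt, Nat.count_eq_card_filter_range]
  refine le_trans (Finset.card_le_card fun i hi => ?_) (Finset.card_union_le _ _)
  simp only [Finset.mem_union, Finset.mem_filter] at hi ⊢
  grind

lemma abs_cnt_sub_cnt_le_count_ne (x y : ℕ → Fin k) (a : Fin k) (n : ℕ) :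
    |(cnt x a n : ℝ) - cnt y a n| ≤ n.count (fun i => x i ≠ y i) := by
  have hxy : (cnt x a n : ℝ) ≤ cnt y a n + n.count (fun i => x i ≠ y i) :=
    mod_cast cnt_le_cnt_add_count_ne x y a n
  have hyx : (cnt y a n : ℝ) ≤ cnt x a n + n.count (fun i => x i ≠ y i) := by
    simpa only [ne_comm, Nat.cast_add] using
      Nat.cast_le (α := ℝ).mpr (cnt_le_cnt_add_count_ne y x a n)
  rw [abs_sub_le_iff]
  constructor <;> linarith

end Counting

section Density

/-- The set of natural numbers satisfying `p` has asymptotic density zero. -/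
def HasDensityZero (p : ℕ → Prop) [DecidablePred p] : Prop :=
  Tendsto (fun n : ℕ => (n.count p : ℝ) / n) atTop (𝓝 0)

lemma HasDensityZero.mono {p q : ℕ → Prop} [DecidablePred p] [DecidablePred q]
    (hq : HasDensityZero q) (hpq : ∀ i, p i → q i) : HasDensityZero p := by
  refine squeeze_zero (fun n => by positivity) (fun n => ?_) hq
  gcongr
  exact hpq _

lemma count_isSquare_le_sqrt_add_one (n : ℕ) : n.count IsSquare ≤ n.sqrt + 1 := by
  have hsub : (Finset.range n).filter IsSquare ⊆
      (Finset.range (n.sqrt + 1)).image fun m => m * m := by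
    intro i hi
    obtain ⟨hin, m, rfl⟩ := Finset.mem_filter.mp hi
    have hm : m ≤ n.sqrt := Nat.le_sqrt.mpr (Finset.mem_range.mp hin).le
    exact Finset.mem_image_of_mem _ (Finset.mem_range.mpr (Nat.lt_succ_of_le hm))
  calc n.count IsSquare = ((Finset.range n).filter IsSquare).card :=
        Nat.count_eq_card_filter_range _ n
    _ ≤ ((Finset.range (n.sqrt + 1)).image fun m => m * m).card := Finset.card_le_card hsub
    _ ≤ n.sqrt + 1 := Finset.card_image_le.trans_eq (Finset.card_range _)

lemma hasDensityZero_isSquare : HasDensityZero IsSquare := by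
  have hsqrt : Tendsto (fun n : ℕ => (√(n : ℝ))⁻¹) atTop (𝓝 0) :=
    (Real.tendsto_sqrt_atTop.comp tendsto_natCast_atTop_atTop).inv_tendsto_atTop
  have hsum : Tendsto (fun n : ℕ => (√(n : ℝ))⁻¹ + (n : ℝ)⁻¹) atTop (𝓝 0) := by
    simpa only [add_zero] using hsqrt.add tendsto_inv_atTop_nhds_zero_nat
  refine squeeze_zero (fun n => by positivity) (fun n => ?_) hsum
  calc (n.count IsSquare : ℝ) / n ≤ (n.sqrt + 1 : ℕ) / n := by
        gcongr
        exact count_isSquare_le_sqrt_add_one n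
    _ ≤ (√(n : ℝ) + 1) / n := by
        push_cast
        gcongr
        exact Real.nat_sqrt_le_real_sqrt
    _ = (√(n : ℝ))⁻¹ + (n : ℝ)⁻¹ := by rw [add_div, Real.sqrt_div_self', one_div, one_div]

end Density

section Frequency

variable {k : ℕ} {x y : ℕ → Fin k}

lemma HasFreq.congr_of_hasDensityZero {a : Fin k} {r : ℝ} (hx : HasFreq x a r)
    (hxy : HasDensityZero fun i => x i ≠ y i) : HasFreq y a r := by
  refine tendsto_of_tendsto_of_dist hx (squeeze_zero (fun n => dist_nonneg) (fun n => ?_) hxy)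
  rw [Real.dist_eq, ← sub_div, abs_div, Nat.abs_cast]
  gcongr
  exact abs_cnt_sub_cnt_le_count_ne x y a n

lemma mul_cnt_sub_eq_sum_diffSeq (x : ℕ → Fin k) (a : Fin k) (n : ℕ) :
    (k : ℤ) * cnt x a n - n = ∑ b, diffSeq x a b n := by
  simp only [diffSeq, Finset.sum_sub_distrib, Finset.sum_const, Finset.card_univ,
    Fintype.card_fin, nsmul_eq_mul]
  rw [← Nat.cast_sum, sum_cnt]

lemma BoundedSeq.balancedSeq (hx : BoundedSeq x) : BalancedSeq x := by
  obtain ⟨C, hC⟩ := hx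
  intro a
  have hk : (0 : ℝ) < k := mod_cast a.pos
  have hdev (n : ℕ) : |(k : ℝ) * cnt x a n - n| ≤ k * C := by
    have hsum : |(k : ℤ) * cnt x a n - n| ≤ k * C := by
      rw [mul_cnt_sub_eq_sum_diffSeq]
      simpa using (Finset.abs_sum_le_sum_abs _ _).trans
        (Finset.sum_le_card_nsmul Finset.univ _ _ fun b _ => hC a b n)
    exact_mod_cast hsum
  refine tendsto_iff_dist_tendsto_zero.mpr (squeeze_zero' (.of_forall fun _ => dist_nonneg) ?_
    (tendsto_const_div_atTop_nhds_zero_nat (C : ℝ)))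
  filter_upwards [eventually_gt_atTop 0] with n hn
  have hn' : (0 : ℝ) < n := mod_cast hn
  have hcommon : (cnt x a n : ℝ) / n - 1 / k = (k * cnt x a n - n) / (k * n) := by
    field_simp
  calc dist ((cnt x a n : ℝ) / n) (1 / k) = |(k : ℝ) * cnt x a n - n| / (k * n) := by
        rw [Real.dist_eq, hcommon, abs_div, abs_of_pos (mul_pos hk hn')]
    _ ≤ k * C / (k * n) := by
        gcongr
        exact hdev n
    _ = C / n := mul_div_mul_left _ _ hk.ne'

end Frequency

section Recolor

variable {k : ℕ} (x : ℕ → Fin k) (p : ℕ → Prop) [DecidablePred p] (c : Fin k)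

/-- The color sequence obtained from `x` by repainting the positions satisfying `p` with `c`. -/
def recolor (i : ℕ) : Fin k :=
  if p i then c else x i

lemma recolor_eq_self_iff (i : ℕ) : recolor x p c i = c ↔ x i = c ∨ p i ∧ x i ≠ c := by
  grind [recolor]

lemma cnt_recolor_self (n : ℕ) :
    cnt (recolor x p c) c n = cnt x c n + n.count (fun i => p i ∧ x i ≠ c) := by
  simp only [cnt, recolor_eq_self_iff, Finset.filter_or, Nat.count_eq_card_filter_range]
  exact Finset.card_union_of_disjoint (Finset.disjoint_filter.mpr fun _ _ hx h => h.2 hx)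

variable {c}

lemma cnt_recolor_le_of_ne {b : Fin k} (hb : b ≠ c) (n : ℕ) :
    cnt (recolor x p c) b n ≤ cnt x b n := by
  simp only [cnt_eq_count]
  refine Nat.count_mono_left fun i _ hi => ?_
  grind [recolor]

lemma diffSeq_add_count_le_diffSeq_recolor {b : Fin k} (hb : b ≠ c) (n : ℕ) :
    diffSeq x c b n + n.count (fun i => p i ∧ x i ≠ c) ≤ diffSeq (recolor x p c) c b n := by
  have hcnt_c := cnt_recolor_self x p c n
  have hcnt_b := cnt_recolor_le_of_ne x p hb n
  unfold diffSeq
  omega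

variable {x p}

lemma BoundedSeq.not_boundedSeq_recolor (hx : BoundedSeq x)
    (hp : {i | p i ∧ x i ≠ c}.Infinite) : ¬ BoundedSeq (recolor x p c) := by
  rintro ⟨D, hD⟩
  obtain ⟨C, hC⟩ := hx
  obtain ⟨i, -, hi⟩ := hp.nonempty
  obtain ⟨n, hn⟩ : ∃ n : ℕ, n.count (fun i => p i ∧ x i ≠ c) = C + D + 1 :=
    ⟨_, Nat.count_nth_of_infinite hp _⟩
  have hgap := diffSeq_add_count_le_diffSeq_recolor x p hi n
  have hlower := neg_le_of_abs_le (hC c (x i) n)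
  have hupper := le_of_abs_le (hD c (x i) n)
  omega

lemma BalancedSeq.recolor_of_hasDensityZero (hx : BalancedSeq x) (hp : HasDensityZero p)
    (c : Fin k) : BalancedSeq (recolor x p c) := by
  have hne : HasDensityZero fun i => x i ≠ recolor x p c i :=
    hp.mono fun i hi => by_contra fun hpi => hi (if_neg hpi).symm
  exact fun a => (hx a).congr_of_hasDensityZero hne

end Recolor

section Cyclic

variable (k : ℕ) [NeZero k]

/-- The periodic color sequence `0, 1, …, k - 1, 0, 1, …`. -/
def cyclicSeq (i : ℕ) : Fin k :=
  Fin.ofNat k i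

lemma cyclicSeq_eq_iff_modEq (i : ℕ) (a : Fin k) : cyclicSeq k i = a ↔ i ≡ a [MOD k] := by
  rw [cyclicSeq, Fin.ext_iff, Fin.val_ofNat, Nat.ModEq, Nat.mod_eq_of_lt a.isLt]

lemma cnt_cyclicSeq (a : Fin k) (n : ℕ) :
    cnt (cyclicSeq k) a n = n / k + if (a : ℕ) < n % k then 1 else 0 := by
  simp only [cnt_eq_count, cyclicSeq_eq_iff_modEq]
  rw [Nat.count_modEq_card n (NeZero.pos k), Nat.mod_eq_of_lt a.isLt]

lemma boundedSeq_cyclicSeq : BoundedSeq (cyclicSeq k) := by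
  refine ⟨1, fun a b n => ?_⟩
  rw [diffSeq, cnt_cyclicSeq, cnt_cyclicSeq, abs_le]
  split_ifs <;> omega

lemma infinite_isSquare_and_cyclicSeq_ne_zero (hk : 2 ≤ k) :
    {i | IsSquare i ∧ cyclicSeq k i ≠ 0}.Infinite := by
  refine Set.infinite_of_injective_forall_mem (f := fun j => (k * j + 1) ^ 2) ?_ fun j => ?_
  · intro i j hij
    simpa [NeZero.ne k] using hij
  · have hbase : k * j + 1 ≡ 1 [MOD k] := by simp [Nat.ModEq]
    have hsq : (k * j + 1) ^ 2 ≡ 1 [MOD k] := by simpa only [one_pow] using hbase.pow 2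
    refine ⟨IsSquare.sq _, fun hzero => ?_⟩
    rw [cyclicSeq_eq_iff_modEq, Fin.val_zero] at hzero
    have hdvd : k ∣ 1 := Nat.modEq_zero_iff_dvd.mp (hsq.symm.trans hzero)
    exact absurd (Nat.le_of_dvd one_pos hdvd) (by omega)

end Cyclic

theorem exists_balanced_not_bounded_general {k : ℕ} (hk : 2 ≤ k) :
    ∃ x : ℕ → Fin k, BalancedSeq x ∧ ¬ BoundedSeq x := by
  have : NeZero k := ⟨by omega⟩
  have hbdd : BoundedSeq (cyclicSeq k) := boundedSeq_cyclicSeq k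
  exact ⟨recolor (cyclicSeq k) IsSquare 0,
    hbdd.balancedSeq.recolor_of_hasDensityZero hasDensityZero_isSquare 0,
    hbdd.not_boundedSeq_recolor (infinite_isSquare_and_cyclicSeq_ne_zero k hk)⟩

theorem exists_balanced_not_bounded :
    ∃ x : ℕ → Fin 3, BalancedSeq x ∧ ¬ BoundedSeq x :=
  exists_balanced_not_bounded_general (by norm_num)
end

section
/- Let k ≥ 1 and let y, z : ℕ → Fin k be bounded infinite color sequences. Then every infinite color sequence x that is a shuffle of y and z is bounded. -/
open Filter Topology

/-- `s` is the infinite concatenation of the finite words `w 0, w 1, w 2, …`.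
The total length must be infinite, and each word occupies the corresponding
block of positions of `s`. -/
def IsConcat {k : ℕ} (w : ℕ → List (Fin k)) (s : ℕ → Fin k) : Prop :=
  Tendsto (fun n : ℕ => ∑ i ∈ Finset.range n, (w i).length) atTop atTop ∧
  ∀ (n j : ℕ) (hj : j < (w n).length),
    s ((∑ i ∈ Finset.range n, (w i).length) + j) = (w n).get ⟨j, hj⟩

/-- `x` is a shuffle of `y` and `z`: `x = w₁w₂w₃⋯`, `y` is the concatenation of
the odd-indexed words and `z` of the even-indexed words. -/
def IsShuffle {k : ℕ} (x y z : ℕ → Fin k) : Prop :=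
  ∃ w : ℕ → List (Fin k),
    IsConcat w x ∧ IsConcat (fun n => w (2 * n)) y ∧
      IsConcat (fun n => w (2 * n + 1)) z

/-!
Cut `x` at an arbitrary position: the cut falls inside some word `wₙ`, so the prefix of `x` consists
of the complete words before `wₙ` together with an initial piece of `wₙ`. The words of either parity
in it, with the initial piece attached to those of the same parity as `wₙ`, form a prefix of `y`,
respectively `z`. Hence the letter counts of every prefix of `x` are the sums of those of a prefix
of `y` and a prefix of `z`, and bounds for `y` and `z` add up to a bound for `x`.
-/

section Concatenation

variable {k : ℕ}

theorem cnt_eq_count_map_range (s : ℕ → Fin k) (a : Fin k) (n : ℕ) :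
    cnt s a n = ((List.range n).map s).count a := by
  rw [cnt, ← Nat.count_eq_card_filter_range, Nat.count, List.count, List.countP_map]
  rfl

theorem cnt_add (s : ℕ → Fin k) (a : Fin k) (m n : ℕ) :
    cnt s a (m + n) = cnt s a m + cnt (fun i => s (m + i)) a n := by
  simp only [cnt, ← Nat.count_eq_card_filter_range, Nat.count_add]

/-- The position in the concatenation of `w 0, w 1, …` at which the word `w n` begins; it is the
total length of the preceding words. -/
def blockStart {α : Type*} (w : ℕ → List α) (n : ℕ) : ℕ :=
  ∑ i ∈ Finset.range n, (w i).length

theorem blockStart_zero {α : Type*} (w : ℕ → List α) : blockStart w 0 = 0 :=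
  Finset.sum_range_zero _

theorem blockStart_succ {α : Type*} (w : ℕ → List α) (n : ℕ) :
    blockStart w (n + 1) = blockStart w n + (w n).length :=
  Finset.sum_range_succ _ n

namespace IsConcat

variable {w : ℕ → List (Fin k)} {s : ℕ → Fin k}

theorem exists_eq_blockStart_add (h : IsConcat w s) (m : ℕ) :
    ∃ n, ∃ j < (w n).length, m = blockStart w n + j := by
  have unbounded : ¬BddAbove (Set.range (blockStart w)) := not_bddAbove_of_tendsto_atTop h.1
  have blocks_cover : ⋃ n, Set.Ico (blockStart w n) (blockStart w (n + 1)) = Set.Ici 0 :=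
    iUnion_Ico_map_succ_eq_Ici (fun _ => Nat.zero_le _) unbounded
  obtain ⟨n, start_le, lt_next⟩ := Set.mem_iUnion.mp (blocks_cover.ge (Nat.zero_le m))
  rw [blockStart_succ] at lt_next
  exact ⟨n, m - blockStart w n, by omega, by omega⟩

theorem map_range_block (h : IsConcat w s) {n j : ℕ} (hj : j ≤ (w n).length) :
    (List.range j).map (fun i => s (blockStart w n + i)) = (w n).take j := by
  refine List.ext_getElem (by simpa using hj) fun i _ hi => ?_
  simpa [blockStart] using h.2 n i (hi.trans_le (List.length_take_le' _ _))

theorem cnt_blockStart_add (h : IsConcat w s) (a : Fin k) {n j : ℕ} (hj : j ≤ (w n).length) :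
    cnt s a (blockStart w n + j) = cnt s a (blockStart w n) + ((w n).take j).count a := by
  rw [cnt_add, cnt_eq_count_map_range _ a j, h.map_range_block hj]

theorem cnt_blockStart_succ (h : IsConcat w s) (a : Fin k) (n : ℕ) :
    cnt s a (blockStart w (n + 1)) = cnt s a (blockStart w n) + (w n).count a := by
  rw [blockStart_succ, h.cnt_blockStart_add a le_rfl, List.take_length]

theorem cnt_blockStart_two_mul {x y z : ℕ → Fin k} (hx : IsConcat w x)
    (hy : IsConcat (fun n => w (2 * n)) y) (hz : IsConcat (fun n => w (2 * n + 1)) z)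
    (a : Fin k) (r : ℕ) :
    cnt x a (blockStart w (2 * r)) =
      cnt y a (blockStart (fun n => w (2 * n)) r) +
        cnt z a (blockStart (fun n => w (2 * n + 1)) r) := by
  induction r with
  | zero => simp [blockStart_zero, cnt]
  | succ r ih =>
    rw [Nat.mul_succ, hx.cnt_blockStart_succ, hx.cnt_blockStart_succ, ih, hy.cnt_blockStart_succ,
      hz.cnt_blockStart_succ, add_assoc, add_add_add_comm]

end IsConcat

end Concatenation

namespace IsShuffle

variable {k : ℕ} {x y z : ℕ → Fin k}

theorem exists_cnt_eq_add (h : IsShuffle x y z) (m : ℕ) :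
    ∃ p q, ∀ a, cnt x a m = cnt y a p + cnt z a q := by
  obtain ⟨w, hx, hy, hz⟩ := h
  obtain ⟨n, j, hj, rfl⟩ := hx.exists_eq_blockStart_add m
  obtain ⟨r, rfl | rfl⟩ := Nat.even_or_odd' n
  · refine ⟨blockStart (fun i => w (2 * i)) r + j, blockStart (fun i => w (2 * i + 1)) r,
      fun a => ?_⟩
    rw [hx.cnt_blockStart_add a hj.le, hx.cnt_blockStart_two_mul hy hz,
      hy.cnt_blockStart_add a hj.le, add_right_comm]
  · refine ⟨blockStart (fun i => w (2 * i)) (r + 1), blockStart (fun i => w (2 * i + 1)) r + j,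
      fun a => ?_⟩
    rw [hx.cnt_blockStart_add a hj.le, hx.cnt_blockStart_succ, hx.cnt_blockStart_two_mul hy hz,
      hy.cnt_blockStart_succ, hz.cnt_blockStart_add a hj.le, add_right_comm (cnt y a _),
      add_assoc (cnt y a _ + _)]

theorem exists_diffSeq_eq_add (h : IsShuffle x y z) (m : ℕ) :
    ∃ p q, ∀ a b, diffSeq x a b m = diffSeq y a b p + diffSeq z a b q := by
  obtain ⟨p, q, cnt_eq⟩ := h.exists_cnt_eq_add m
  refine ⟨p, q, fun a b => ?_⟩
  simp only [diffSeq, cnt_eq, Nat.cast_add, add_sub_add_comm]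

end IsShuffle

theorem shuffle_of_bounded_is_bounded {k : ℕ} (hk : 1 ≤ k)
    (y z : ℕ → Fin k) (hy : BoundedSeq y) (hz : BoundedSeq z)
    (x : ℕ → Fin k) (hx : IsShuffle x y z) : BoundedSeq x := by
  obtain ⟨C, hC⟩ := hy
  obtain ⟨D, hD⟩ := hz
  refine ⟨C + D, fun a b n => ?_⟩
  obtain ⟨p, q, diff_eq⟩ := hx.exists_diffSeq_eq_add n
  calc |diffSeq x a b n| = |diffSeq y a b p + diffSeq z a b q| := by rw [diff_eq]
    _ ≤ |diffSeq y a b p| + |diffSeq z a b q| := abs_add_le _ _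
    _ ≤ C + D := add_le_add (hC a b p) (hD a b q)
    _ = ((C + D : ℕ) : ℤ) := (Nat.cast_add C D).symm
end

section
/- Let k ≥ 1, let f : Fin k → ℝ, and let y, z : ℕ → Fin k be infinite color sequences that both have frequency vector f. Then every infinite color sequence x that is a shuffle of y and z has frequency vector f. -/
/-!
Having frequency `r` means that the discrepancy `cnt s a n - r * n` is `o(n)`. A prefix of a shuffle
of `y` and `z` is interleaved from a prefix of `y` and a prefix of `z`, and the discrepancy is
additive under this splitting. One of the two prefixes may stay short, so its own length need not
tend to infinity; but an `o(n)` discrepancy is at most `ε * n + C` in absolute value for *every*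
`n`, hence also `o` of the length of the whole.
-/

open Filter Topology

/-- `x` has frequency vector `f`. -/
def HasFreqVector {k : ℕ} (x : ℕ → Fin k) (f : Fin k → ℝ) : Prop :=
  ∀ a : Fin k, HasFreq x a (f a)

open Asymptotics

section Asymptotics

variable {ι κ E F G : Type*}

theorem tendsto_div_iff_sub_mul_isLittleO {𝕜 : Type*} [NormedField 𝕜] {l : Filter ι} {u v : ι → 𝕜}
    {r : 𝕜} (hv : ∀ᶠ i in l, v i ≠ 0) :
    Tendsto (fun i => u i / v i) l (𝓝 r) ↔ (fun i => u i - r * v i) =o[l] v := by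
  rw [isLittleO_iff_tendsto' (hv.mono fun _ h h0 => absurd h0 h), ← tendsto_sub_nhds_zero_iff]
  refine tendsto_congr' (hv.mono fun i hi => ?_)
  simp only [sub_div, mul_div_cancel_right₀ r hi]

theorem exists_forall_norm_le_mul_norm_add_of_isBigOWith [Norm E] [Norm F] {u : ι → E} {v : ι → F}
    {c : ℝ} (h : IsBigOWith c cofinite u v) : ∃ C, ∀ i, ‖u i‖ ≤ c * ‖v i‖ + C := by
  have hbdd : IsBoundedUnder (· ≤ ·) cofinite fun i => ‖u i‖ - c * ‖v i‖ :=
    isBoundedUnder_of_eventually_le (h.bound.mono fun _ => sub_nonpos.2)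
  obtain ⟨C, hC⟩ := hbdd.bddAbove_range_of_cofinite
  exact ⟨C, fun i => sub_le_iff_le_add'.1 (hC (Set.mem_range_self i))⟩

theorem isLittleO_comp_of_isBigO_comp [Norm E] [SeminormedAddCommGroup F]
    [SeminormedAddCommGroup G] {u : ι → E} {v : ι → F} {w : κ → G} {p : κ → ι} {l : Filter κ}
    (huv : u =o[cofinite] v) (hvw : (v ∘ p) =O[l] w) (hw : Tendsto (fun j => ‖w j‖) l atTop) :
    (u ∘ p) =o[l] w := by
  have hsum : (u ∘ p) =o[l] fun j => ‖v (p j)‖ + ‖w j‖ := by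
    refine isLittleO_iff.2 fun ε hε => ?_
    obtain ⟨C, hC⟩ := exists_forall_norm_le_mul_norm_add_of_isBigOWith (huv.forall_isBigOWith hε)
    filter_upwards [hw.eventually_ge_atTop (C / ε)] with j hj
    calc ‖u (p j)‖ ≤ ε * ‖v (p j)‖ + C := hC (p j)
      _ ≤ ε * ‖v (p j)‖ + ε * ‖w j‖ := by gcongr; exact (div_le_iff₀' hε).1 hj
      _ = ε * ‖‖v (p j)‖ + ‖w j‖‖ := by rw [← mul_add, Real.norm_of_nonneg (by positivity)]
  exact hsum.trans_isBigO (hvw.norm_left.add (isBigO_refl w l).norm_left)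

end Asymptotics

theorem sum_range_two_mul {M : Type*} [AddCommMonoid M] (g : ℕ → M) (n : ℕ) :
    ∑ i ∈ Finset.range (2 * n), g i =
      ∑ i ∈ Finset.range n, g (2 * i) + ∑ i ∈ Finset.range n, g (2 * i + 1) := by
  rw [← Finset.sum_add_distrib]
  induction n with
  | zero => rfl
  | succ n ih =>
    rw [Nat.mul_succ, Finset.sum_range_succ, Finset.sum_range_succ, ih, Finset.sum_range_succ,
      add_assoc]

/-- The position at which the word `w n` starts in the concatenation `w 0, w 1, w 2, …`. -/
def wordStart {α : Type*} (w : ℕ → List α) (n : ℕ) : ℕ :=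
  ∑ i ∈ Finset.range n, (w i).length

section WordStart

variable {α : Type*} (w : ℕ → List α) (n : ℕ)

theorem wordStart_succ : wordStart w (n + 1) = wordStart w n + (w n).length :=
  Finset.sum_range_succ _ _

theorem wordStart_two_mul :
    wordStart w (2 * n) =
      wordStart (fun i => w (2 * i)) n + wordStart (fun i => w (2 * i + 1)) n :=
  sum_range_two_mul _ _

end WordStart

section Frequency

variable {k : ℕ}

theorem cnt_succ (s : ℕ → Fin k) (a : Fin k) (n : ℕ) :
    cnt s a (n + 1) = cnt s a n + if s n = a then 1 else 0 := by
  simp only [cnt, ← Nat.count_eq_card_filter_range, Nat.count_succ]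

theorem hasFreq_iff_isLittleO {s : ℕ → Fin k} {a : Fin k} {r : ℝ} :
    HasFreq s a r ↔ (fun n : ℕ => (cnt s a n : ℝ) - r * n) =o[atTop] fun n : ℕ => (n : ℝ) :=
  tendsto_div_iff_sub_mul_isLittleO ((eventually_ne_atTop 0).mono fun _ => Nat.cast_ne_zero.2)

theorem HasFreq.isLittleO_comp {s : ℕ → Fin k} {a : Fin k} {r : ℝ} (h : HasFreq s a r)
    {p : ℕ → ℕ} (hp : ∀ n, p n ≤ n) :
    (fun n => (cnt s a (p n) : ℝ) - r * p n) =o[atTop] fun n : ℕ => (n : ℝ) := by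
  have hdisc := hasFreq_iff_isLittleO.1 h
  rw [← Nat.cofinite_eq_atTop] at hdisc
  refine isLittleO_comp_of_isBigO_comp hdisc (isBigO_of_le _ fun n => ?_)
    (tendsto_norm_atTop_atTop.comp tendsto_natCast_atTop_atTop)
  simpa using hp n

namespace IsConcat

variable {w : ℕ → List (Fin k)} {s : ℕ → Fin k}

theorem exists_wordStart_add (h : IsConcat w s) (n : ℕ) :
    ∃ m, ∃ j < (w m).length, wordStart w m + j = n := by
  have hcover : ⋃ m, Set.Ico (wordStart w m) (wordStart w (m + 1)) = Set.Ici 0 :=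
    iUnion_Ico_map_succ_eq_Ici (fun _ => Nat.zero_le _) (not_bddAbove_of_tendsto_atTop h.1)
  obtain ⟨m, hm, hm'⟩ := Set.mem_iUnion.1 (hcover.ge (Nat.zero_le n))
  rw [wordStart_succ] at hm'
  exact ⟨m, n - wordStart w m, by omega, by omega⟩

theorem cnt_wordStart_add (h : IsConcat w s) (a : Fin k) {n j : ℕ} (hj : j ≤ (w n).length) :
    cnt s a (wordStart w n + j) = cnt s a (wordStart w n) + ((w n).take j).count a := by
  induction j with
  | zero => simp
  | succ j ih =>
    have hletter : s (wordStart w n + j) = (w n)[j] := h.2 n j hj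
    rw [← add_assoc, cnt_succ, ih (Nat.le_of_succ_le hj), hletter,
      List.take_succ_eq_append_getElem hj, List.count_append, List.count_singleton, add_assoc]
    simp only [beq_iff_eq]

theorem cnt_wordStart (h : IsConcat w s) (a : Fin k) (n : ℕ) :
    cnt s a (wordStart w n) = ∑ i ∈ Finset.range n, (w i).count a := by
  induction n with
  | zero => rfl
  | succ n ih =>
    rw [wordStart_succ, h.cnt_wordStart_add a le_rfl, ih, Finset.sum_range_succ, List.take_length]

end IsConcat

theorem cnt_wordStart_two_mul {w : ℕ → List (Fin k)} {x y z : ℕ → Fin k} (hx : IsConcat w x)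
    (hy : IsConcat (fun n => w (2 * n)) y) (hz : IsConcat (fun n => w (2 * n + 1)) z)
    (a : Fin k) (n : ℕ) :
    cnt x a (wordStart w (2 * n)) =
      cnt y a (wordStart (fun i => w (2 * i)) n) +
        cnt z a (wordStart (fun i => w (2 * i + 1)) n) := by
  rw [hx.cnt_wordStart, hy.cnt_wordStart, hz.cnt_wordStart, sum_range_two_mul]

theorem IsShuffle.exists_cnt_eq_add_s4 {x y z : ℕ → Fin k} (h : IsShuffle x y z) (n : ℕ) :
    ∃ p q, p + q = n ∧ ∀ a, cnt x a n = cnt y a p + cnt z a q := by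
  obtain ⟨w, hx, hy, hz⟩ := h
  obtain ⟨m, j, hj, rfl⟩ := hx.exists_wordStart_add n
  have hboundary := cnt_wordStart_two_mul hx hy hz
  obtain ⟨t, rfl | rfl⟩ := m.even_or_odd'
  · refine ⟨wordStart (fun i => w (2 * i)) t + j, wordStart (fun i => w (2 * i + 1)) t, ?_,
      fun a => ?_⟩
    · rw [wordStart_two_mul, add_right_comm]
    · rw [hx.cnt_wordStart_add a hj.le, hboundary, hy.cnt_wordStart_add a hj.le, add_right_comm]
  · refine ⟨wordStart (fun i => w (2 * i)) (t + 1), wordStart (fun i => w (2 * i + 1)) t + j, ?_,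
      fun a => ?_⟩
    · rw [wordStart_succ, wordStart_succ, wordStart_two_mul]
      omega
    · rw [hx.cnt_wordStart_add a hj.le, wordStart_succ, hx.cnt_wordStart_add a le_rfl, hboundary,
        wordStart_succ, hy.cnt_wordStart_add a le_rfl, hz.cnt_wordStart_add a hj.le]
      omega

theorem shuffle_of_freq_has_freq_general {x y z : ℕ → Fin k} {a : Fin k} {r : ℝ}
    (hy : HasFreq y a r) (hz : HasFreq z a r) (hx : IsShuffle x y z) : HasFreq x a r := by
  choose p q hpq hcnt using hx.exists_cnt_eq_add_s4
  have hyp := hy.isLittleO_comp fun n => Nat.le.intro (hpq n)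
  have hzq := hz.isLittleO_comp fun n => Nat.le.intro ((add_comm _ _).trans (hpq n))
  refine hasFreq_iff_isLittleO.2 ((hyp.add hzq).congr_left fun n => ?_)
  have hlength : (p n + q n : ℝ) = n := mod_cast hpq n
  rw [hcnt, ← hlength]
  push_cast
  ring

end Frequency

theorem shuffle_of_freq_has_freq {k : ℕ} (hk : 1 ≤ k) (f : Fin k → ℝ)
    (y z : ℕ → Fin k) (hy : HasFreqVector y f) (hz : HasFreqVector z f)
    (x : ℕ → Fin k) (hx : IsShuffle x y z) : HasFreqVector x f :=
  fun a => shuffle_of_freq_has_freq_general (hy a) (hz a) hx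
end

section
/- Let G = (A, W) be a k-colored game such that the goal W ⊆ (Fin k)^ω is prefix-independent and convex. Then the game is determined: player 0 or player 1 has a winning strategy. Moreover, if player 1 has a winning strategy, then player 1 has a memoryless winning strategy. -/
open Filter Topology

/-- The word `z` prepended to the infinite sequence `x`. -/
def prepend {k : ℕ} (z : List (Fin k)) (x : ℕ → Fin k) : ℕ → Fin k := fun n =>
  if h : n < z.length then z.get ⟨n, h⟩ else x (n - z.length)

/-- A goal is prefix-independent if membership is invariant under prepending
any finite word. -/
def PrefixIndep {k : ℕ} (W : Set (ℕ → Fin k)) : Prop :=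
  ∀ (z : List (Fin k)) (x : ℕ → Fin k), x ∈ W ↔ prepend z x ∈ W

/-- A goal is convex if it is closed under shuffles. -/
def ConvexGoal {k : ℕ} (W : Set (ℕ → Fin k)) : Prop :=
  ∀ y z : ℕ → Fin k, y ∈ W → z ∈ W → ∀ x : ℕ → Fin k, IsShuffle x y z → x ∈ W

/-- A `k`-colored arena on node type `V`: a partition of the nodes given by the
predicate `isV1` (player 1's nodes; player 0 owns the rest), an initial node
and a serial set of colored edges `(source, color, target)`. -/
structure Arena (V : Type) (k : ℕ) where
  isV1 : V → Prop
  vini : V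
  E : Set (V × Fin k × V)
  serial : ∀ v : V, ∃ e ∈ E, e.1 = v

namespace Arena

variable {V : Type} {k : ℕ}

/-- The last node of a finite history (the target of its last edge), `vini`
for the empty history. -/
def lastNode (A : Arena V k) (l : List (V × Fin k × V)) : V :=
  (l.getLast?.map fun e => e.2.2).getD A.vini

/-- A valid finite history: a finite path from `vini` along edges of the arena. -/
def IsHistory (A : Arena V k) (l : List (V × Fin k × V)) : Prop :=
  (∀ e ∈ l, e ∈ A.E) ∧ List.Chain' (fun e f => e.2.2 = f.1) l ∧
    ∀ e, l.head? = some e → e.1 = A.vini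

/-- `σ` is a strategy for the player owning the nodes satisfying `inP`:
on every valid history ending in a node of that player (including the empty
history when `vini` is such a node) it returns an edge of the arena extending
the history. -/
def IsStrategy (A : Arena V k) (inP : V → Prop)
    (σ : List (V × Fin k × V) → V × Fin k × V) : Prop :=
  ∀ l, A.IsHistory l → inP (A.lastNode l) → σ l ∈ A.E ∧ (σ l).1 = A.lastNode l

/-- An infinite play: an infinite path along edges of the arena starting at `vini`. -/
def IsPlay (A : Arena V k) (p : ℕ → V × Fin k × V) : Prop :=
  (p 0).1 = A.vini ∧ ∀ i : ℕ, p i ∈ A.E ∧ (p i).2.2 = (p (i + 1)).1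

/-- The play `p` is consistent with the strategy `σ` of the player owning the
nodes satisfying `inP`. -/
def Consistent (A : Arena V k) (inP : V → Prop)
    (σ : List (V × Fin k × V) → V × Fin k × V) (p : ℕ → V × Fin k × V) : Prop :=
  (inP A.vini → p 0 = σ []) ∧
    ∀ i : ℕ, inP ((p i).2.2) → p (i + 1) = σ (List.ofFn fun j : Fin (i + 1) => p j)

/-- The color sequence of a play. -/
def colorSeq (p : ℕ → V × Fin k × V) : ℕ → Fin k := fun i => (p i).2.1

/-- Player 0's nodes. -/
def isV0 (A : Arena V k) : V → Prop := fun v => ¬ A.isV1 v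

/-- `σ` is a winning strategy for player 0 w.r.t. the goal `W`. -/
def WinningFor0 (A : Arena V k) (W : Set (ℕ → Fin k))
    (σ : List (V × Fin k × V) → V × Fin k × V) : Prop :=
  A.IsStrategy A.isV0 σ ∧
    ∀ p : ℕ → V × Fin k × V, A.IsPlay p → A.Consistent A.isV0 σ p → colorSeq p ∈ W

/-- `σ` is a winning strategy for player 1 w.r.t. the goal `W`. -/
def WinningFor1 (A : Arena V k) (W : Set (ℕ → Fin k))
    (σ : List (V × Fin k × V) → V × Fin k × V) : Prop :=
  A.IsStrategy A.isV1 σ ∧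
    ∀ p : ℕ → V × Fin k × V, A.IsPlay p → A.Consistent A.isV1 σ p → colorSeq p ∉ W

/-- A strategy is memoryless if its value on a (valid) history only depends on
the last node of the history. -/
def Memoryless (A : Arena V k) (σ : List (V × Fin k × V) → V × Fin k × V) : Prop :=
  ∀ l l', A.IsHistory l → A.IsHistory l' → A.lastNode l = A.lastNode l' → σ l = σ l'

end Arena

/-!
Only positional choices of player 1 matter, so one argues by induction on the number of edges
player 1 owns. Suppose player 1 has two different edges at a node `v`, and split the edges leaving
`v` into two nonempty parts, giving two smaller games. If player 1 wins one of them from the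
initial node, the same memoryless strategy wins the whole game. Otherwise player 0 wins both. If
player 0 also wins the second one from `v`, the two winning strategies can be interleaved: each
visit to `v` resumes the play of the part that player 1 selects there, so the resulting color
sequence is a shuffle of two sequences in `W` (or has one of them as a tail). If instead player 1
wins the second game from `v`, then by prefix-independence a winning strategy of player 0 in that
game never lets `v` be reached, and hence it also wins the whole game.
-/

section Sequences

theorem apply_nth_count_of_const_off {α : Type*} {M : ℕ → Prop} [DecidablePred M] {f : ℕ → α}
    (hM : (Set.ofPred M).Infinite) (hf : ∀ n, ¬M n → f (n + 1) = f n) (n : ℕ) :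
    f (Nat.nth M (Nat.count M n)) = f n := by
  have const_up_to : ∀ m, n ≤ m → m ≤ Nat.nth M (Nat.count M n) → f m = f n := by
    intro m hnm
    induction m, hnm using Nat.le_induction with
    | base => exact fun _ => rfl
    | succ m hnm ih =>
      intro hm
      have not_mem : ¬M m := fun h => by
        have := Nat.nth_monotone hM (Nat.count_monotone M hnm)
        rw [Nat.nth_count h] at this
        omega
      rw [hf m not_mem, ih (by omega)]
  exact const_up_to _ (Nat.le_nth_count hM n) le_rfl

variable {k : ℕ} {W : Set (ℕ → Fin k)}

theorem PrefixIndep.shift_mem_iff (hpi : PrefixIndep W) (x : ℕ → Fin k) (n : ℕ) :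
    (fun j => x (j + n)) ∈ W ↔ x ∈ W := by
  have prepend_shift : prepend (List.ofFn fun j : Fin n => x j) (fun j => x (j + n)) = x := by
    funext i
    by_cases hi : i < n
    · simp [prepend, hi]
    · simp [prepend, hi, Nat.sub_add_cancel (not_lt.1 hi)]
  rw [hpi (List.ofFn fun j : Fin n => x j), prepend_shift]

theorem PrefixIndep.comp_nth_mem_iff (hpi : PrefixIndep W) (x : ℕ → Fin k) {M : ℕ → Prop}
    (hM : ∀ᶠ n in atTop, M n) : (fun j => x (Nat.nth M j)) ∈ W ↔ x ∈ W := by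
  classical
  obtain ⟨N, hN⟩ := eventually_atTop.1 hM
  have nth_shift : ∀ j, Nat.nth M (j + Nat.count M N) = j + N := fun j => by
    have count_tail : Nat.count (fun i => M (i + N)) j = j :=
      Nat.count_of_forall fun i _ => hN _ (Nat.le_add_left N i)
    rw [← Nat.nth_count (hN (j + N) (Nat.le_add_left N j)), Nat.count_add', count_tail]
  rw [← hpi.shift_mem_iff _ (Nat.count M N), ← hpi.shift_mem_iff x N]
  simp only [nth_shift]

theorem isConcat_filter (x : ℕ → Fin k) {M : ℕ → Prop} [DecidablePred M]
    (hM : (Set.ofPred M).Infinite) :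
    IsConcat (fun n => if M n then [x n] else []) fun j => x (Nat.nth M j) := by
  have sum_length : ∀ n,
      ∑ i ∈ Finset.range n, (if M i then [x i] else []).length = Nat.count M n := by
    intro n
    rw [Nat.count_eq_card_filter_range, Finset.card_filter]
    exact Finset.sum_congr rfl fun i _ => by split_ifs <;> rfl
  refine ⟨?_, fun n j hj => ?_⟩
  · simp only [sum_length]
    exact tendsto_atTop_atTop_of_monotone (Nat.count_monotone M) fun b =>
      ⟨Nat.nth M b, (Nat.count_nth_of_infinite hM b).ge⟩
  · by_cases h : M n
    · obtain rfl : j = 0 := by simpa [h] using hj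
      simp [sum_length, h, Nat.nth_count h]
    · simp [h] at hj

theorem isShuffle_comp_nth (x : ℕ → Fin k) {M : ℕ → Prop} (hM : (Set.ofPred M).Infinite)
    (hM' : {n | ¬M n}.Infinite) :
    IsShuffle x (fun j => x (Nat.nth M j)) fun j => x (Nat.nth (fun n => ¬M n) j) := by
  classical
  -- All three concatenations are filters; that of `x` is a filter of `x 0, x 0, x 1, x 1, …`.
  let slot : ℕ → ℕ := fun n => if M n then 2 * n else 2 * n + 1
  let Used : ℕ → Prop := fun i => M (i / 2) ↔ i % 2 = 0
  have used_even : ∀ n, Used (2 * n) ↔ M n := fun n => by simp [Used]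
  have used_odd : ∀ n, Used (2 * n + 1) ↔ ¬M n := fun n => by
    simp [Used, Nat.mul_add_div]
  have slot_strictMono : StrictMono slot := strictMono_nat_of_lt_succ fun n => by
    simp only [slot]
    split_ifs <;> omega
  have used_slot : ∀ n, Used (slot n) := fun n => by
    by_cases hn : M n
    · simp [slot, hn, used_even]
    · simp [slot, hn, used_odd]
  have mem_range_slot : ∀ i, Used i → i ∈ Set.range slot := fun i hi => by
    refine ⟨i / 2, ?_⟩
    by_cases hn : M (i / 2)
    · have even : i % 2 = 0 := hi.1 hn
      simp only [slot, if_pos hn]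
      omega
    · have odd : i % 2 ≠ 0 := mt hi.2 hn
      simp only [slot, if_neg hn]
      omega
  have infinite_used : (Set.ofPred Used).Infinite :=
    Set.infinite_of_injective_forall_mem slot_strictMono.injective used_slot
  have nth_used : ∀ n, Nat.nth Used n = slot n := fun n => by
    rw [← Nat.nth_comp_of_strictMono slot_strictMono mem_range_slot
      fun hfin => absurd hfin infinite_used]
    simp only [used_slot, Nat.nth_true]
  have slot_div_two : ∀ n, slot n / 2 = n := fun n => by
    simp only [slot]
    split_ifs <;> omega
  refine ⟨fun i => if Used i then [x (i / 2)] else [], ?_, ?_, ?_⟩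
  · simpa only [nth_used, slot_div_two] using isConcat_filter (fun i => x (i / 2)) infinite_used
  · simpa [used_even] using isConcat_filter x hM
  · simpa [used_odd, Nat.mul_add_div] using isConcat_filter x hM'

theorem ConvexGoal.mem_of_comp_nth_mem (hcv : ConvexGoal W) (hpi : PrefixIndep W)
    {x : ℕ → Fin k} (M : ℕ → Prop)
    (h : (Set.ofPred M).Infinite → (fun j => x (Nat.nth M j)) ∈ W)
    (h' : {n | ¬M n}.Infinite → (fun j => x (Nat.nth (fun n => ¬M n) j)) ∈ W) : x ∈ W := by
  by_cases hM : (Set.ofPred M).Infinite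
  · by_cases hM' : {n | ¬M n}.Infinite
    · exact hcv _ _ (h hM) (h' hM') x (isShuffle_comp_nth x hM hM')
    · refine (hpi.comp_nth_mem_iff x ?_).1 (h hM)
      rw [← Nat.cofinite_eq_atTop, eventually_cofinite]
      exact Set.not_infinite.1 hM'
  · have hfin : ∀ᶠ n in atTop, ¬M n := by
      rw [← Nat.cofinite_eq_atTop, eventually_cofinite]
      simpa using hM
    refine (hpi.comp_nth_mem_iff x hfin).1 (h' ?_)
    exact Nat.frequently_atTop_iff_infinite.1 hfin.frequently

end Sequences

section MemoryStrategies

/-- A strategy with memory states in `S`, in the form of a transducer: `update` is applied to every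
edge of the play, whoever chose it, and `choose s v` is the edge taken at `v` in state `s`. The
player and the initial state are not part of the data. -/
structure MemoryStrategy (V : Type) (k : ℕ) (S : Type) where
  update : S → V × Fin k × V → S
  choose : S → V → V × Fin k × V

variable {V : Type} {k : ℕ} {S T : Type} {P : V → Prop} {E E₁ E₂ : Set (V × Fin k × V)}
  {G W : Set (ℕ → Fin k)}

/-- An infinite path along edges in `E` that starts at `u`. -/
def IsEdgePath (E : Set (V × Fin k × V)) (u : V) (p : ℕ → V × Fin k × V) : Prop :=
  (p 0).1 = u ∧ ∀ i, p i ∈ E ∧ (p i).2.2 = (p (i + 1)).1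

namespace MemoryStrategy

/-- A configuration consists of a memory state and a node; traversing `e` updates both. -/
def next (σ : MemoryStrategy V k S) (c : S × V) (e : V × Fin k × V) : S × V :=
  (σ.update c.1 e, e.2.2)

/-- The edge `e` of `E` can be traversed in the configuration `c` when the owner of the nodes
satisfying `P` plays `σ`. -/
structure Allows (σ : MemoryStrategy V k S) (P : V → Prop) (E : Set (V × Fin k × V)) (c : S × V)
    (e : V × Fin k × V) : Prop where
  mem : e ∈ E
  source_eq : e.1 = c.2
  eq_choose : P c.2 → e = σ.choose c.1 c.2

/-- `c` is the sequence of configurations of the infinite path `p` through `E`, on which the owner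
of the nodes satisfying `P` plays `σ`. -/
structure IsRun (σ : MemoryStrategy V k S) (P : V → Prop) (E : Set (V × Fin k × V))
    (p : ℕ → V × Fin k × V) (c : ℕ → S × V) : Prop where
  allows : ∀ n, σ.Allows P E (c n) (p n)
  succ : ∀ n, c (n + 1) = σ.next (c n) (p n)

/-- In every memory state, `σ` chooses an edge of `E` leaving the current node. -/
def IsLegal (σ : MemoryStrategy V k S) (P : V → Prop) (E : Set (V × Fin k × V)) : Prop :=
  ∀ s v, P v → σ.choose s v ∈ E ∧ (σ.choose s v).1 = v

/-- Playing `σ` from the configuration `c₀`, the owner of the nodes satisfying `P` forces the color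
sequence into `G`. -/
structure Wins (σ : MemoryStrategy V k S) (P : V → Prop) (E : Set (V × Fin k × V))
    (G : Set (ℕ → Fin k)) (c₀ : S × V) : Prop where
  isLegal : σ.IsLegal P E
  colorSeq_mem : ∀ p c, σ.IsRun P E p c → c 0 = c₀ → Arena.colorSeq p ∈ G

variable {σ : MemoryStrategy V k S} {p : ℕ → V × Fin k × V} {c : ℕ → S × V} {c₀ : S × V}

theorem IsLegal.mono (h : σ.IsLegal P E₁) (hE : E₁ ⊆ E) : σ.IsLegal P E :=
  fun s v hv => ⟨hE (h s v hv).1, (h s v hv).2⟩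

theorem IsRun.isEdgePath (h : σ.IsRun P E p c) : IsEdgePath E (c 0).2 p :=
  ⟨(h.allows 0).source_eq, fun i =>
    ⟨(h.allows i).mem, by rw [(h.allows (i + 1)).source_eq, h.succ]; rfl⟩⟩

theorem IsRun.cons {e : V × Fin k × V} (he : σ.Allows P E c₀ e) (h : σ.IsRun P E p c)
    (h0 : c 0 = σ.next c₀ e) :
    σ.IsRun P E (fun n => n.casesOn e p) fun n => n.casesOn c₀ c where
  allows
    | 0 => he
    | n + 1 => h.allows n
  succ
    | 0 => h0
    | n + 1 => h.succ n

theorem isRun_comp_nth {M : ℕ → Prop} (hM : (Set.ofPred M).Infinite)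
    (stay : ∀ n, ¬M n → c (n + 1) = c n)
    (move : ∀ n, M n → σ.Allows P E (c n) (p n) ∧ c (n + 1) = σ.next (c n) (p n)) :
    σ.IsRun P E (fun j => p (Nat.nth M j)) fun j => c (Nat.nth M j) where
  allows j := (move _ (Nat.nth_mem_of_infinite hM j)).1
  succ j := by
    classical
    rw [← (move _ (Nat.nth_mem_of_infinite hM j)).2]
    have resumes := apply_nth_count_of_const_off hM stay (Nat.nth M j + 1)
    rwa [Nat.count_nth_succ_of_infinite hM] at resumes

theorem Wins.comp_nth_mem {M : ℕ → Prop} (h : σ.Wins P E G (c 0)) (hM : (Set.ofPred M).Infinite)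
    (stay : ∀ n, ¬M n → c (n + 1) = c n)
    (move : ∀ n, M n → σ.Allows P E (c n) (p n) ∧ c (n + 1) = σ.next (c n) (p n)) :
    (fun j => Arena.colorSeq p (Nat.nth M j)) ∈ G := by
  classical
  refine h.colorSeq_mem _ _ (isRun_comp_nth hM stay move) ?_
  simpa using apply_nth_count_of_const_off hM stay 0

theorem Wins.next (h : σ.Wins P E W c₀) (hpi : PrefixIndep W) {e : V × Fin k × V}
    (he : σ.Allows P E c₀ e) : σ.Wins P E W (σ.next c₀ e) where
  isLegal := h.isLegal
  colorSeq_mem _ _ hrun h0 :=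
    (hpi.shift_mem_iff _ 1).2 (h.colorSeq_mem _ _ (hrun.cons he h0) rfl)

theorem Wins.of_subset_of_own (h : σ.Wins P E₁ G c₀) (hE : E₁ ⊆ E)
    (hown : ∀ e ∈ E, ¬P e.1 → e ∈ E₁) : σ.Wins P E G c₀ where
  isLegal := h.isLegal.mono hE
  colorSeq_mem p c hrun := by
    refine h.colorSeq_mem p c ⟨fun n => ?_, hrun.succ⟩
    obtain ⟨mem, source_eq, eq_choose⟩ := hrun.allows n
    refine ⟨?_, source_eq, eq_choose⟩
    by_cases hP : P (c n).2
    · exact eq_choose hP ▸ (h.isLegal _ _ hP).1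
    · exact hown _ mem (source_eq ▸ hP)

theorem Wins.of_subset_of_avoids (h : σ.Wins P E₁ W c₀) (hpi : PrefixIndep W) (hE : E₁ ⊆ E) {v : V}
    (hoff : ∀ e ∈ E, e.1 ≠ v → e ∈ E₁) (hv : ∀ s, ¬σ.Wins P E₁ W (s, v)) : σ.Wins P E W c₀ where
  isLegal := h.isLegal.mono hE
  colorSeq_mem p c hrun h0 := by
    have allows_of_wins : ∀ n, σ.Wins P E₁ W (c n) → σ.Allows P E₁ (c n) (p n) := by
      intro n hn
      obtain ⟨mem, source_eq, eq_choose⟩ := hrun.allows n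
      refine ⟨hoff _ mem fun hpv => hv (c n).1 ?_, source_eq, eq_choose⟩
      rwa [← hpv, source_eq]
    have wins : ∀ n, σ.Wins P E₁ W (c n) := by
      intro n
      induction n with
      | zero => exact h0 ▸ h
      | succ n ih => exact hrun.succ n ▸ ih.next hpi (allows_of_wins n ih)
    exact h.colorSeq_mem p c ⟨fun n => allows_of_wins n (wins n), hrun.succ⟩ h0

theorem exists_common_run {σ : MemoryStrategy V k S} {τ : MemoryStrategy V k T}
    (hσ : σ.IsLegal (fun x => ¬P x) E) (hτ : τ.IsLegal P E) (s : S) (t : T) (u : V) :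
    ∃ p c d, σ.IsRun (fun x => ¬P x) E p c ∧ τ.IsRun P E p d ∧ c 0 = (s, u) ∧ d 0 = (t, u) := by
  classical
  let edge : S × T × V → V × Fin k × V := fun x =>
    if P x.2.2 then τ.choose x.2.1 x.2.2 else σ.choose x.1 x.2.2
  let step : S × T × V → S × T × V := fun x =>
    (σ.update x.1 (edge x), τ.update x.2.1 (edge x), (edge x).2.2)
  let r : ℕ → S × T × V := fun n => step^[n] (s, t, u)
  have r_succ : ∀ n, r (n + 1) = step (r n) := fun n => Function.iterate_succ_apply' step n _
  have edge_legal : ∀ x, edge x ∈ E ∧ (edge x).1 = x.2.2 := fun x => by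
    by_cases hx : P x.2.2
    · simpa only [edge, if_pos hx] using hτ _ _ hx
    · simpa only [edge, if_neg hx] using hσ _ _ hx
  refine ⟨fun n => edge (r n), fun n => ((r n).1, (r n).2.2), fun n => (r n).2,
    ⟨fun n => ⟨(edge_legal _).1, (edge_legal _).2, fun hP => if_neg hP⟩, fun n => ?_⟩,
    ⟨fun n => ⟨(edge_legal _).1, (edge_legal _).2, fun hP => if_pos hP⟩, fun n => ?_⟩, rfl, rfl⟩
  all_goals simp only [r_succ]; rfl

section Interleave

/-- The edge `e` continues the first of two interleaved plays, which has configuration `c` and takes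
place in `E₁`. -/
def Continues (E₁ : Set (V × Fin k × V)) (c : S × V) (e : V × Fin k × V) : Prop :=
  c.2 = e.1 ∧ e ∈ E₁

open Classical in
/-- The strategy that plays `σ₁` and `σ₂` alternately, remembering a configuration of each. The
first play is the one continued as long as this is possible within `E₁`. -/
noncomputable def interleave (σ₁ : MemoryStrategy V k S) (σ₂ : MemoryStrategy V k T)
    (E₁ : Set (V × Fin k × V)) : MemoryStrategy V k ((S × V) × (T × V)) where
  update c e := if Continues E₁ c.1 e then (σ₁.next c.1 e, c.2) else (c.1, σ₂.next c.2 e)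
  choose c x := if c.1.2 = x then σ₁.choose c.1.1 x else σ₂.choose c.2.1 x

/-- One of the two interleaved plays is at the current node and the other one waits at `v`. -/
def OneWaitsAt (v : V) (c : ((S × V) × (T × V)) × V) : Prop :=
  c.1.1.2 = c.2 ∧ c.1.2.2 = v ∨ c.1.1.2 = v ∧ c.1.2.2 = c.2

variable {σ₁ : MemoryStrategy V k S} {σ₂ : MemoryStrategy V k T} {v : V}
  {c : ((S × V) × (T × V)) × V} {e : V × Fin k × V}

theorem Allows.fst_of_interleave (he : (interleave σ₁ σ₂ E₁).Allows P E c e)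
    (hcont : Continues E₁ c.1.1 e) : σ₁.Allows P E₁ c.1.1 e where
  mem := hcont.2
  source_eq := hcont.1.symm
  eq_choose hP := by
    have at_node : c.1.1.2 = c.2 := hcont.1.trans he.source_eq
    rw [at_node] at hP ⊢
    exact (he.eq_choose hP).trans (if_pos at_node)

theorem OneWaitsAt.snd_of_continues (h : OneWaitsAt v c)
    (he : (interleave σ₁ σ₂ E₁).Allows P E c e) (hcont : Continues E₁ c.1.1 e) :
    c.1.2.2 = v := by
  have at_node : c.1.1.2 = c.2 := hcont.1.trans he.source_eq
  rcases h with ⟨-, snd_waits⟩ | ⟨fst_waits, snd_at_node⟩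
  · exact snd_waits
  · rw [snd_at_node, ← at_node, fst_waits]

theorem OneWaitsAt.fst_of_not_continues (h : OneWaitsAt v c)
    (hoff : ∀ e, e.1 ≠ v → (e ∈ E₁ ↔ e ∈ E₂))
    (he : (interleave σ₁ σ₂ E₁).Allows P (E₁ ∪ E₂) c e) (hcont : ¬Continues E₁ c.1.1 e) :
    c.1.1.2 = v ∧ c.1.2.2 = c.2 := by
  rcases h with ⟨fst_at_node, snd_waits⟩ | h
  · have not_mem : e ∉ E₁ := fun hmem => hcont ⟨fst_at_node.trans he.source_eq.symm, hmem⟩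
    have source_eq : e.1 = v := by
      by_contra hne
      exact not_mem (he.mem.elim id (hoff e hne).2)
    have at_v : c.2 = v := he.source_eq.symm.trans source_eq
    exact ⟨fst_at_node.trans at_v, snd_waits.trans at_v.symm⟩
  · exact h

theorem OneWaitsAt.allows_snd_of_not_continues (h : OneWaitsAt v c) (hPv : ¬P v)
    (hoff : ∀ e, e.1 ≠ v → (e ∈ E₁ ↔ e ∈ E₂))
    (he : (interleave σ₁ σ₂ E₁).Allows P (E₁ ∪ E₂) c e) (hcont : ¬Continues E₁ c.1.1 e) :
    σ₂.Allows P E₂ c.1.2 e := by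
  obtain ⟨fst_waits, snd_at_node⟩ := h.fst_of_not_continues hoff he hcont
  refine ⟨?_, he.source_eq.trans snd_at_node.symm, fun hP => ?_⟩
  · by_contra hmem
    have mem_fst : e ∈ E₁ := he.mem.resolve_right hmem
    have source_ne : e.1 ≠ v := fun heq => hcont ⟨fst_waits.trans heq.symm, mem_fst⟩
    exact hmem ((hoff e source_ne).1 mem_fst)
  · rw [snd_at_node] at hP ⊢
    have fst_away : c.1.1.2 ≠ c.2 := fun heq => hPv (fst_waits ▸ heq ▸ hP)
    exact (he.eq_choose hP).trans (if_neg fst_away)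

theorem OneWaitsAt.next (h : OneWaitsAt v c) (hoff : ∀ e, e.1 ≠ v → (e ∈ E₁ ↔ e ∈ E₂))
    (he : (interleave σ₁ σ₂ E₁).Allows P (E₁ ∪ E₂) c e) :
    OneWaitsAt v ((interleave σ₁ σ₂ E₁).next c e) := by
  by_cases hcont : Continues E₁ c.1.1 e
  · left
    simpa [MemoryStrategy.next, interleave, hcont] using h.snd_of_continues he hcont
  · right
    simpa [MemoryStrategy.next, interleave, hcont] using
      (h.fst_of_not_continues hoff he hcont).1

theorem IsLegal.interleave (h₁ : σ₁.IsLegal P E₁) (h₂ : σ₂.IsLegal P E₂) :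
    (interleave σ₁ σ₂ E₁).IsLegal P (E₁ ∪ E₂) := by
  intro s x hx
  by_cases hs : s.1.2 = x
  · simpa only [MemoryStrategy.interleave, if_pos hs] using
      h₁.mono Set.subset_union_left s.1.1 x hx
  · simpa only [MemoryStrategy.interleave, if_neg hs] using
      h₂.mono Set.subset_union_right s.2.1 x hx

theorem Wins.interleave (hpi : PrefixIndep W) (hcv : ConvexGoal W) (hPv : ¬P v)
    (hoff : ∀ e, e.1 ≠ v → (e ∈ E₁ ↔ e ∈ E₂)) {s : S} {t : T} {u : V}
    (h₁ : σ₁.Wins P E₁ W (s, u)) (h₂ : σ₂.Wins P E₂ W (t, v)) :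
    (interleave σ₁ σ₂ E₁).Wins P (E₁ ∪ E₂) W (((s, u), (t, v)), u) where
  isLegal := h₁.isLegal.interleave h₂.isLegal
  colorSeq_mem p c hrun h0 := by
    have waits : ∀ n, OneWaitsAt v (c n) := by
      intro n
      induction n with
      | zero => exact h0 ▸ Or.inl ⟨rfl, rfl⟩
      | succ n ih => exact hrun.succ n ▸ ih.next hoff (hrun.allows n)
    refine hcv.mem_of_comp_nth_mem hpi (fun n => Continues E₁ (c n).1.1 (p n))
      (fun hM => ?_) (fun hM => ?_)
    · refine Wins.comp_nth_mem (c := fun n => (c n).1.1) (by rwa [h0]) hM (fun n hn => ?_)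
        (fun n hn => ⟨(hrun.allows n).fst_of_interleave hn, ?_⟩)
      all_goals simp [hrun.succ n, MemoryStrategy.next, MemoryStrategy.interleave, hn]
    · refine Wins.comp_nth_mem (c := fun n => (c n).1.2) (by rwa [h0]) hM
        (fun n hn => ?_) (fun n hn =>
          ⟨(waits n).allows_snd_of_not_continues hPv hoff (hrun.allows n) hn, ?_⟩)
      · simp [hrun.succ n, MemoryStrategy.next, MemoryStrategy.interleave, not_not.1 hn]
      · simp [hrun.succ n, MemoryStrategy.next, MemoryStrategy.interleave, hn]

end Interleave

/-- The strategy that follows the path `p` and takes the edge `d v` at a node `v` off the path. The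
memory counts the edges played. -/
def follow [DecidableEq V] (p : ℕ → V × Fin k × V) (d : V → V × Fin k × V) :
    MemoryStrategy V k ℕ where
  update n _ := n + 1
  choose n v := if (p n).1 = v then p n else d v

theorem wins_follow [DecidableEq V] {u : V} (hp : IsEdgePath E u p)
    (hpG : Arena.colorSeq p ∈ G) {d : V → V × Fin k × V} (hd : ∀ v, d v ∈ E ∧ (d v).1 = v)
    (hinj : Set.InjOn Prod.fst {e ∈ E | ¬P e.1}) : (follow p d).Wins P E G (0, u) where
  isLegal n v _ := by
    by_cases hv : (p n).1 = v
    · simpa only [follow, if_pos hv] using ⟨(hp.2 n).1, hv⟩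
    · simpa only [follow, if_neg hv] using hd v
  colorSeq_mem q c hrun h0 := by
    have eq_of_config : ∀ n, c n = (n, (p n).1) → q n = p n := by
      intro n hn
      obtain ⟨mem, source_eq, eq_choose⟩ := hrun.allows n
      rw [hn] at source_eq eq_choose
      by_cases hP : P (p n).1
      · exact (eq_choose hP).trans (if_pos rfl)
      · exact hinj ⟨mem, source_eq ▸ hP⟩ ⟨(hp.2 n).1, hP⟩ source_eq
    have config : ∀ n, c n = (n, (p n).1) := by
      intro n
      induction n with
      | zero => rw [h0, hp.1]
      | succ n ih => rw [hrun.succ, eq_of_config n ih, ih, ← (hp.2 n).2]; rfl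
    rwa [funext fun n => eq_of_config n (config n)]

end MemoryStrategy

/-- The owner of the nodes satisfying `P` has a strategy with memory that forces the color sequence
of every path in `E` from `u` into `G`. -/
def WinsFrom (P : V → Prop) (E : Set (V × Fin k × V)) (G : Set (ℕ → Fin k)) (u : V) : Prop :=
  ∃ (S : Type) (σ : MemoryStrategy V k S) (s : S), σ.Wins P E G (s, u)

/-- As `WinsFrom`, with a strategy that has a single memory state. -/
def MemorylessWinsFrom (P : V → Prop) (E : Set (V × Fin k × V)) (G : Set (ℕ → Fin k)) (u : V) :
    Prop :=
  ∃ σ : MemoryStrategy V k Unit, σ.Wins P E G ((), u)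

variable {u v : V}

theorem MemorylessWinsFrom.winsFrom (h : MemorylessWinsFrom P E G u) : WinsFrom P E G u :=
  let ⟨σ, hσ⟩ := h
  ⟨Unit, σ, (), hσ⟩

theorem MemorylessWinsFrom.of_subset_of_own (h : MemorylessWinsFrom P E₁ G u) (hE : E₁ ⊆ E)
    (hown : ∀ e ∈ E, ¬P e.1 → e ∈ E₁) : MemorylessWinsFrom P E G u :=
  let ⟨σ, hσ⟩ := h
  ⟨σ, hσ.of_subset_of_own hE hown⟩

theorem WinsFrom.not_winsFrom_compl (h : WinsFrom (fun x => ¬P x) E G u) :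
    ¬WinsFrom P E Gᶜ u := by
  rintro ⟨T, τ, t, hτ⟩
  obtain ⟨S, σ, s, hσ⟩ := h
  obtain ⟨p, c, d, hc, hd, hc0, hd0⟩ :=
    MemoryStrategy.exists_common_run hσ.isLegal hτ.isLegal s t u
  exact hτ.colorSeq_mem p d hd hd0 (hσ.colorSeq_mem p c hc hc0)

theorem WinsFrom.union (hpi : PrefixIndep W) (hcv : ConvexGoal W) (hPv : ¬P v)
    (hoff : ∀ e, e.1 ≠ v → (e ∈ E₁ ↔ e ∈ E₂)) (h₁ : WinsFrom P E₁ W u) (h₂ : WinsFrom P E₂ W v) :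
    WinsFrom P (E₁ ∪ E₂) W u :=
  let ⟨_, _, _, hσ₁⟩ := h₁
  let ⟨_, _, _, hσ₂⟩ := h₂
  ⟨_, _, _, hσ₁.interleave hpi hcv hPv hoff hσ₂⟩

theorem WinsFrom.of_subset_of_not_winsFrom (h : WinsFrom P E₁ W u) (hpi : PrefixIndep W)
    (hE : E₁ ⊆ E) (hoff : ∀ e ∈ E, e.1 ≠ v → e ∈ E₁) (hv : ¬WinsFrom P E₁ W v) :
    WinsFrom P E W u :=
  let ⟨S, σ, s, hσ⟩ := h
  ⟨S, σ, s, hσ.of_subset_of_avoids hpi hE hoff fun t ht => hv ⟨S, σ, t, ht⟩⟩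

theorem winsFrom_or_memorylessWinsFrom_of_injOn (hE : ∀ v, ∃ e ∈ E, e.1 = v)
    (hinj : Set.InjOn Prod.fst {e ∈ E | P e.1}) (u : V) :
    WinsFrom (fun x => ¬P x) E W u ∨ MemorylessWinsFrom P E Wᶜ u := by
  classical
  choose d hd using hE
  by_cases hpath : ∃ p, IsEdgePath E u p ∧ Arena.colorSeq p ∈ W
  · obtain ⟨p, hp, hpW⟩ := hpath
    refine .inl ⟨ℕ, _, 0, MemoryStrategy.wins_follow hp hpW hd ?_⟩
    simpa only [not_not] using hinj
  · refine .inr ⟨⟨fun _ _ => (), fun _ => d⟩, fun _ v _ => hd v, fun p c hrun h0 hpW => ?_⟩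
    have hp := hrun.isEdgePath
    rw [h0] at hp
    exact hpath ⟨p, hp, hpW⟩

theorem winsFrom_or_memorylessWinsFrom_union (hpi : PrefixIndep W) (hcv : ConvexGoal W)
    (hPv : P v) (hoff : ∀ e, e.1 ≠ v → (e ∈ E₁ ↔ e ∈ E₂))
    (h₁ : ∀ u, WinsFrom (fun x => ¬P x) E₁ W u ∨ MemorylessWinsFrom P E₁ Wᶜ u)
    (h₂ : ∀ u, WinsFrom (fun x => ¬P x) E₂ W u ∨ MemorylessWinsFrom P E₂ Wᶜ u) (u : V) :
    WinsFrom (fun x => ¬P x) (E₁ ∪ E₂) W u ∨ MemorylessWinsFrom P (E₁ ∪ E₂) Wᶜ u := by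
  have mem_fst : ∀ e ∈ E₁ ∪ E₂, e.1 ≠ v → e ∈ E₁ := fun e he hne => he.elim id (hoff e hne).2
  have mem_snd : ∀ e ∈ E₁ ∪ E₂, e.1 ≠ v → e ∈ E₂ := fun e he hne => he.elim (hoff e hne).1 id
  have ne_of_not : ∀ e : V × Fin k × V, ¬P e.1 → e.1 ≠ v := fun e he heq => he (heq ▸ hPv)
  rcases h₁ u with hu₁ | hu₁
  · rcases h₂ u with hu₂ | hu₂
    · rcases h₂ v with hv₂ | hv₂
      · exact .inl (hu₁.union hpi hcv (not_not.2 hPv) hoff hv₂)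
      · exact .inl (hu₂.of_subset_of_not_winsFrom hpi Set.subset_union_right mem_snd
          fun hv => hv.not_winsFrom_compl hv₂.winsFrom)
    · exact .inr (hu₂.of_subset_of_own Set.subset_union_right
        fun e he hPe => mem_snd e he (ne_of_not e hPe))
  · exact .inr (hu₁.of_subset_of_own Set.subset_union_left
      fun e he hPe => mem_fst e he (ne_of_not e hPe))

theorem exists_union_eq_of_fst_eq {e₁ e₂ : V × Fin k × V} (hE : ∀ v, ∃ e ∈ E, e.1 = v)
    (he₁ : e₁ ∈ E) (he₂ : e₂ ∈ E) (hsource : e₁.1 = e₂.1) (hne : e₁ ≠ e₂) :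
    ∃ E₁ E₂, E₁ ∪ E₂ = E ∧ (∀ e, e.1 ≠ e₁.1 → (e ∈ E₁ ↔ e ∈ E₂)) ∧ e₂ ∉ E₁ ∧ e₁ ∉ E₂ ∧
      (∀ v, ∃ e ∈ E₁, e.1 = v) ∧ ∀ v, ∃ e ∈ E₂, e.1 = v := by
  refine ⟨{e ∈ E | e ≠ e₂}, {e ∈ E | e.1 = e₁.1 → e = e₂}, ?_, ?_, ?_, ?_, fun v => ?_, fun v => ?_⟩
  · ext e
    grind
  · grind
  · grind
  · grind
  · obtain ⟨e, he, rfl⟩ := hE v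
    grind
  · obtain ⟨e, he, rfl⟩ := hE v
    grind

theorem winsFrom_or_memorylessWinsFrom (hpi : PrefixIndep W) (hcv : ConvexGoal W)
    (hE : ∀ v, ∃ e ∈ E, e.1 = v) (hfin : {e ∈ E | P e.1}.Finite) (u : V) :
    WinsFrom (fun x => ¬P x) E W u ∨ MemorylessWinsFrom P E Wᶜ u := by
  induction hn : {e ∈ E | P e.1}.ncard using Nat.strong_induction_on generalizing E u with
  | _ n ih =>
  by_cases hinj : Set.InjOn Prod.fst {e ∈ E | P e.1}
  · exact winsFrom_or_memorylessWinsFrom_of_injOn hE hinj u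
  obtain ⟨e₁, ⟨he₁, hP₁⟩, e₂, ⟨he₂, hP₂⟩, hsource, hne⟩ :
      ∃ e₁ ∈ {e ∈ E | P e.1}, ∃ e₂ ∈ {e ∈ E | P e.1}, e₁.1 = e₂.1 ∧ e₁ ≠ e₂ := by
    simpa only [Set.InjOn, not_forall, exists_prop] using hinj
  obtain ⟨E₁, E₂, rfl, hoff, hmem₁, hmem₂, hE₁, hE₂⟩ :=
    exists_union_eq_of_fst_eq hE he₁ he₂ hsource hne
  have of_smaller : ∀ E' ⊆ E₁ ∪ E₂, (∀ v, ∃ e ∈ E', e.1 = v) →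
      (∃ e ∈ E₁ ∪ E₂, P e.1 ∧ e ∉ E') →
      ∀ u, WinsFrom (fun x => ¬P x) E' W u ∨ MemorylessWinsFrom P E' Wᶜ u := by
    rintro E' hsub hE' ⟨e, he, hPe, hmem⟩ u
    have ssubset : {e ∈ E' | P e.1} ⊂ {e ∈ E₁ ∪ E₂ | P e.1} :=
      ⟨fun e he => ⟨hsub he.1, he.2⟩, fun h => hmem (h ⟨he, hPe⟩).1⟩
    exact ih _ (hn ▸ Set.ncard_lt_ncard ssubset hfin) hE' (hfin.subset ssubset.subset) u rfl
  exact winsFrom_or_memorylessWinsFrom_union hpi hcv hP₁ hoff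
    (of_smaller E₁ Set.subset_union_left hE₁ ⟨e₂, he₂, hP₂, hmem₁⟩)
    (of_smaller E₂ Set.subset_union_right hE₂ ⟨e₁, he₁, hP₁, hmem₂⟩) u

end MemoryStrategies

namespace Arena

variable {V : Type} {k : ℕ} {A : Arena V k} {P : V → Prop} {G : Set (ℕ → Fin k)}
  {σ : List (V × Fin k × V) → V × Fin k × V} {p : ℕ → V × Fin k × V}

/-- The common form of `Arena.WinningFor0` and `Arena.WinningFor1`: the player owning the nodes
satisfying `P` forces the color sequence into `G`. -/
def IsWinning (A : Arena V k) (P : V → Prop) (G : Set (ℕ → Fin k))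
    (σ : List (V × Fin k × V) → V × Fin k × V) : Prop :=
  A.IsStrategy P σ ∧ ∀ p, A.IsPlay p → A.Consistent P σ p → colorSeq p ∈ G

theorem IsPlay.lastNode_ofFn (hp : A.IsPlay p) (n : ℕ) :
    A.lastNode (List.ofFn fun j : Fin n => p j) = (p n).1 := by
  cases n with
  | zero => simp [lastNode, hp.1]
  | succ n => simp [lastNode, List.ofFn_succ_last, (hp.2 n).2, -List.ofFn_succ]

theorem IsPlay.isHistory_ofFn (hp : A.IsPlay p) (n : ℕ) :
    A.IsHistory (List.ofFn fun j : Fin n => p j) := by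
  refine ⟨?_, List.isChain_iff_getElem.2 fun i hi => ?_, fun e he => ?_⟩
  · simpa only [List.forall_mem_ofFn_iff] using fun i : Fin n => (hp.2 i).1
  · simpa only [List.getElem_ofFn] using (hp.2 i).2
  · cases n with
    | zero => simp at he
    | succ n =>
      obtain rfl : p 0 = e := by simpa using he
      exact hp.1

theorem IsPlay.consistent_iff (hp : A.IsPlay p) :
    A.Consistent P σ p ↔ ∀ n, P (p n).1 → p n = σ (List.ofFn fun j : Fin n => p j) := by
  refine ⟨fun h n => ?_, fun h => ⟨fun hP => ?_, fun i hP => h (i + 1) ((hp.2 i).2 ▸ hP)⟩⟩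
  · cases n with
    | zero => simpa [hp.1] using h.1
    | succ n => simpa only [(hp.2 n).2] using h.2 n
  · simpa using h 0 (hp.1 ▸ hP)

theorem IsWinning.winsFrom (h : A.IsWinning P G σ) : WinsFrom P A.E G A.vini := by
  classical
  choose d hd using A.serial
  let τ : MemoryStrategy V k (List (V × Fin k × V)) :=
    { update := fun l e => l ++ [e]
      choose := fun l v => if σ l ∈ A.E ∧ (σ l).1 = v then σ l else d v }
  refine ⟨_, τ, [], fun l v _ => ?_, fun p c hrun h0 => ?_⟩
  · by_cases hl : σ l ∈ A.E ∧ (σ l).1 = v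
    · simpa only [τ, if_pos hl] using hl
    · simpa only [τ, if_neg hl] using hd v
  · have hp : A.IsPlay p := by
      have hpath := hrun.isEdgePath
      rwa [h0] at hpath
    have state : ∀ n, (c n).1 = List.ofFn fun j : Fin n => p j := by
      intro n
      induction n with
      | zero => simp [h0]
      | succ n ih =>
        simp [hrun.succ, MemoryStrategy.next, τ, ih, List.ofFn_succ_last, -List.ofFn_succ]
    refine h.2 p hp (hp.consistent_iff.2 fun n hP => ?_)
    obtain ⟨-, source_eq, eq_choose⟩ := hrun.allows n
    have legal := h.1 _ (hp.isHistory_ofFn n) (hp.lastNode_ofFn n ▸ hP)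
    rw [← source_eq, state] at eq_choose
    exact (eq_choose hP).trans (if_pos (hp.lastNode_ofFn n ▸ legal))

end Arena

namespace MemoryStrategy

variable {V : Type} {k : ℕ} {S : Type} {A : Arena V k} {P : V → Prop} {G : Set (ℕ → Fin k)}
  {σ : MemoryStrategy V k S} {s : S}

/-- The strategy on histories of `A` that `σ` implements when it starts in the memory state `s`. -/
def onHistories (σ : MemoryStrategy V k S) (A : Arena V k) (s : S) :
    List (V × Fin k × V) → V × Fin k × V :=
  fun l => σ.choose (l.foldl σ.update s) (A.lastNode l)

theorem memoryless_onHistories [Subsingleton S] : A.Memoryless (σ.onHistories A s) :=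
  fun _ _ _ _ hlast => congrArg₂ σ.choose (Subsingleton.elim _ _) hlast

theorem Wins.isWinning_onHistories (h : σ.Wins P A.E G (s, A.vini)) :
    A.IsWinning P G (σ.onHistories A s) := by
  refine ⟨fun l _ hP => h.isLegal _ _ hP, fun p hp hcons => ?_⟩
  rw [hp.consistent_iff] at hcons
  refine h.colorSeq_mem p (fun n => ((List.ofFn fun j : Fin n => p j).foldl σ.update s, (p n).1))
    ⟨fun n => ⟨(hp.2 n).1, rfl, fun hP => ?_⟩, fun n => ?_⟩ (by simp [hp.1])
  · simpa only [onHistories, hp.lastNode_ofFn] using hcons n hP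
  · simp [MemoryStrategy.next, List.ofFn_succ_last, (hp.2 n).2, -List.ofFn_succ]

end MemoryStrategy

theorem determinacy_and_memoryless_for_prefixIndep_convex_general {k : ℕ} {V : Type}
    (A : Arena V k) (hfin : {e ∈ A.E | A.isV1 e.1}.Finite) (W : Set (ℕ → Fin k))
    (hpi : PrefixIndep W) (hcv : ConvexGoal W) :
    ((∃ σ, A.WinningFor0 W σ) ∨ (∃ τ, A.WinningFor1 W τ)) ∧
      ((∃ τ, A.WinningFor1 W τ) →
        ∃ τ, A.WinningFor1 W τ ∧ A.Memoryless τ) := by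
  rcases winsFrom_or_memorylessWinsFrom hpi hcv A.serial hfin A.vini with hwin | ⟨τ, hτ⟩
  · have not_winningFor1 : ¬∃ τ, A.WinningFor1 W τ := fun ⟨_, hτ⟩ =>
      hwin.not_winsFrom_compl (Arena.IsWinning.winsFrom hτ)
    obtain ⟨_, σ, s, hσ⟩ := hwin
    exact ⟨.inl ⟨σ.onHistories A s, hσ.isWinning_onHistories⟩, fun h => (not_winningFor1 h).elim⟩
  · have winningFor1 : A.WinningFor1 W (τ.onHistories A ()) := hτ.isWinning_onHistories
    exact ⟨.inr ⟨_, winningFor1⟩, fun _ => ⟨_, winningFor1, MemoryStrategy.memoryless_onHistories⟩⟩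

theorem determinacy_and_memoryless_for_prefixIndep_convex
    {k : ℕ} (hk : 1 ≤ k) {V : Type} [Fintype V] (A : Arena V k)
    (W : Set (ℕ → Fin k)) (hpi : PrefixIndep W) (hcv : ConvexGoal W) :
    ((∃ σ, A.WinningFor0 W σ) ∨ (∃ τ, A.WinningFor1 W τ)) ∧
      ((∃ τ, A.WinningFor1 W τ) →
        ∃ τ, A.WinningFor1 W τ ∧ A.Memoryless τ) :=
  determinacy_and_memoryless_for_prefixIndep_convex_general A (Set.toFinite _) W hpi hcv
end

section
/- Let d ≥ 1, let L : Fin d → Fin d → ℚ, and let A = {(A_1,w_1),…,(A_m,w_m)} be a finite nonempty set of pairs consisting of an integer d×d matrix and a positive natural number weight. Assume that no natural linear combination of A has ratio L, i.e., there are no c_1,…,c_m ∈ ℕ, not all zero, with Σ_i c_i·A_i = (Σ_i c_i·w_i)·L (entrywise). Let {(B_n, u_n)}_{n∈ℕ} be an infinite sequence of elements of A, and set S_n = Σ_{l=0}^{n} B_l and U_n = Σ_{l=0}^{n} u_l. Then there exist indices i, j ∈ Fin d such that the sequence S_n(i,j)/U_n does not converge to L i j as n → ∞. -/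
open Filter Topology

/-!
The ratios of natural linear combinations are exactly the points of the rational convex hull of the
finitely many points `A_k / w_k`. This hull is closed in the topology of `ι → ℚ`, because it is the
trace of the corresponding real convex hull, which is compact. The ratios of the partial sums lie in
it, so their limit would be a ratio too.

A real convex combination of rational points that happens to be rational becomes a rational convex
combination of the same points by applying to its coefficients a `ℚ`-linear functional `ℝ → ℚ`:
such a functional preserves all rational linear relations, and it can be chosen positive on any
finite set of positive reals.
-/

section RationalPoints

lemma exists_ratLinearMap_pos {s : Set ℝ} (hs : s.Finite) (hpos : ∀ x ∈ s, 0 < x) :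
    ∃ φ : ℝ →ₗ[ℚ] ℚ, ∀ x ∈ s, 0 < φ x := by
  let W := Submodule.span ℚ s
  have : FiniteDimensional ℚ W := FiniteDimensional.span_of_finite ℚ hs
  have : Finite s := hs
  let b := Module.finBasis ℚ W
  let x (a : s) : W := ⟨a, Submodule.subset_span a.2⟩
  have isOpen_pos : IsOpen {y : Fin (Module.finrank ℚ W) → ℝ |
      ∀ a : s, 0 < ∑ i, (b.repr (x a) i : ℝ) * y i} := by
    simp only [Set.ofPred_forall]
    exact isOpen_iInter_of_finite fun a => isOpen_lt continuous_const (by fun_prop)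
  have basis_mem (a : s) : 0 < ∑ i, (b.repr (x a) i : ℝ) * (b i : ℝ) := by
    have hsum : ∑ i, (b.repr (x a) i : ℝ) * (b i : ℝ) = a := by
      have h := congrArg W.subtype (b.sum_repr (x a))
      simpa only [map_sum, map_smul, Rat.smul_def, Submodule.subtype_apply] using h
    exact hsum ▸ hpos a a.2
  -- Perturb the basis values `b i`, which define the inclusion `W → ℝ`, to rationals `q i`.
  obtain ⟨q, hq⟩ := (DenseRange.piMap fun _ => Rat.denseRange_cast).exists_mem_open isOpen_pos
    ⟨fun i => (b i : ℝ), basis_mem⟩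
  obtain ⟨φ, hφ⟩ := LinearMap.exists_extend (b.constr ℚ q : W →ₗ[ℚ] ℚ)
  refine ⟨φ, fun a ha => ?_⟩
  have hφa : φ a = ∑ i, b.repr (x ⟨a, ha⟩) i * q i := by
    simpa [b.constr_apply_fintype ℚ] using LinearMap.congr_fun hφ (x ⟨a, ha⟩)
  have hq_pos : 0 < ∑ i, (b.repr (x ⟨a, ha⟩) i : ℝ) * (q i : ℝ) := hq ⟨a, ha⟩
  rw [hφa]
  exact_mod_cast hq_pos

variable {ι : Type*}

lemma mem_convexHull_rat_of_cast_mem {s : Set (ι → ℚ)} {x : ι → ℚ}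
    (hx : (fun i => (x i : ℝ)) ∈ convexHull ℝ ((fun y i => (y i : ℝ)) '' s)) :
    x ∈ convexHull ℚ s := by
  obtain ⟨τ, _, p, z, hp, hp_sum, hz, hzx⟩ := mem_convexHull_iff_exists_fintype.1 hx
  choose y hy hyz using hz
  have hcoord (i : ι) : ∑ t, p t * (y t i : ℝ) = x i := by
    simpa [← hyz] using congrFun hzx i
  obtain ⟨φ, hφ⟩ := exists_ratLinearMap_pos (s := insert 1 (Set.range p ∩ Set.Ioi 0))
    (((Set.finite_range p).inter_of_left _).insert 1) (by simp +contextual)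
  have hφ_one : 0 < φ 1 := hφ 1 (Set.mem_insert ..)
  have hφ_sum : ∑ t, φ (p t) = φ 1 := by rw [← map_sum, hp_sum]
  have hφ_nonneg (t : τ) : 0 ≤ φ (p t) := by
    rcases (hp t).eq_or_lt with h | h
    · simp [← h]
    · exact (hφ _ (Or.inr ⟨⟨t, rfl⟩, h⟩)).le
  have hφ_mul (r : ℝ) (q : ℚ) : φ (r * q) = q * φ r := by
    rw [mul_comm, ← Rat.smul_def, map_smul, smul_eq_mul]
  have hφ_coord (i : ι) : ∑ t, φ (p t) * y t i = φ 1 * x i := by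
    have h := congrArg φ (hcoord i)
    rw [map_sum, ← one_mul (x i : ℝ)] at h
    simpa only [hφ_mul, mul_comm] using h
  have hcenter : Finset.univ.centerMass (fun t => φ (p t)) y = x := by
    ext i
    simp [Finset.centerMass, hφ_sum, hφ_coord, hφ_one.ne']
  rw [← hcenter]
  exact Finset.centerMass_mem_convexHull _ (fun t _ => hφ_nonneg t) (hφ_sum ▸ hφ_one)
    fun t _ => hy t

lemma cast_mem_convexHull_real {s : Set (ι → ℚ)} {x : ι → ℚ} (hx : x ∈ convexHull ℚ s) :
    (fun i => (x i : ℝ)) ∈ convexHull ℝ ((fun y i => (y i : ℝ)) '' s) := by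
  let castMap : (ι → ℚ) →ₗ[ℚ] (ι → ℝ) := (Algebra.linearMap ℚ ℝ).compLeft ι
  have hconvex : Convex ℚ (convexHull ℝ (castMap '' s)) := (convex_convexHull ℝ _).lift ℚ
  exact convexHull_min (Set.image_subset_iff.1 (subset_convexHull ℝ _))
    (hconvex.linear_preimage castMap) hx

lemma isClosed_convexHull_rat_of_finite {s : Set (ι → ℚ)} (hs : s.Finite) :
    IsClosed (convexHull ℚ s) := by
  have hpreimage : convexHull ℚ s =
      (fun (y : ι → ℚ) i => (y i : ℝ)) ⁻¹' convexHull ℝ ((fun y i => (y i : ℝ)) '' s) :=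
    Set.ext fun _ => ⟨cast_mem_convexHull_real, mem_convexHull_rat_of_cast_mem⟩
  rw [hpreimage]
  exact ((hs.image _).isClosed_convexHull ℝ).preimage
    (continuous_pi fun i => Rat.continuous_coe_real.comp (continuous_apply i))

end RationalPoints

lemma mem_convexHull_range_iff {R E κ : Type*} [Field R] [LinearOrder R] [IsStrictOrderedRing R]
    [AddCommGroup E] [Module R E] [Fintype κ] {v : κ → E} {x : E} :
    x ∈ convexHull R (Set.range v) ↔ ∃ q ∈ stdSimplex R κ, ∑ k, q k • v k = x := by
  classical
  have himage : Set.range v = Fintype.linearCombination R v '' Set.range (Pi.single · 1) := by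
    rw [← Set.range_comp]
    congr 1
    ext k
    simp
  rw [himage, ← LinearMap.image_convexHull, convexHull_rangle_single_eq_stdSimplex]
  simp [Fintype.linearCombination_apply]

lemma exists_common_denom_of_nonneg {κ : Type*} [Finite κ] {r : κ → ℚ} (hr : ∀ k, 0 ≤ r k) :
    ∃ N : ℕ, N ≠ 0 ∧ ∃ c : κ → ℕ, ∀ k, (c k : ℚ) = N * r k := by
  obtain ⟨N, hN⟩ := IsLocalization.exist_integer_multiples_of_finite (nonZeroDivisors ℕ)
    fun k => (r k).toNNRat
  choose c hc using hN
  refine ⟨N, nonZeroDivisors.ne_zero N.2, c, fun k => ?_⟩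
  simpa [Rat.coe_toNNRat _ (hr k)] using congrArg (NNRat.cast (K := ℚ)) (hc k)

section NlcRatios

variable {κ E : Type*} [Fintype κ] [AddCommGroup E] [Module ℚ E]

/-- The ratios `D / n_D` of the natural linear combinations `D` of the family `A` with weights `w`.
The equation is cleared of division; it determines `x` only when the total weight is nonzero, as it
always is for positive weights. -/
def nlcRatios (A : κ → E) (w : κ → ℚ) : Set E :=
  {x | ∃ c : κ → ℕ, c ≠ 0 ∧ ∑ k, (c k : ℚ) • A k = (∑ k, (c k : ℚ) * w k) • x}

lemma nlcRatios_eq_convexHull {A : κ → E} {w : κ → ℚ} (hw : ∀ k, 0 < w k) :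
    nlcRatios A w = convexHull ℚ (Set.range fun k => (w k)⁻¹ • A k) := by
  ext x
  rw [mem_convexHull_range_iff]
  constructor
  · rintro ⟨c, hc, hx⟩
    have hterm_nonneg (k : κ) : 0 ≤ (c k : ℚ) * w k := mul_nonneg (Nat.cast_nonneg _) (hw k).le
    have htotal : 0 < ∑ k, (c k : ℚ) * w k := by
      obtain ⟨k, hk⟩ := Function.ne_iff.1 hc
      exact Finset.sum_pos' (fun k _ => hterm_nonneg k) ⟨k, Finset.mem_univ k,
        mul_pos (Nat.cast_pos.2 (Nat.pos_of_ne_zero hk)) (hw k)⟩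
    refine ⟨fun k => (∑ k, (c k : ℚ) * w k)⁻¹ * (c k * w k), ⟨fun k => ?_, ?_⟩, ?_⟩
    · exact mul_nonneg (inv_nonneg.2 htotal.le) (hterm_nonneg k)
    · rw [← Finset.mul_sum, inv_mul_cancel₀ htotal.ne']
    · simp only [smul_smul, mul_assoc, mul_inv_cancel₀ (hw _).ne', mul_one]
      simp only [← smul_smul, ← Finset.smul_sum]
      rw [hx, inv_smul_smul₀ htotal.ne']
  · rintro ⟨q, ⟨hq_nonneg, hq_sum⟩, rfl⟩
    obtain ⟨N, hN, c, hc⟩ := exists_common_denom_of_nonneg (r := fun k => q k * (w k)⁻¹)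
      fun k => mul_nonneg (hq_nonneg k) (inv_nonneg.2 (hw k).le)
    have htotal : ∑ k, (c k : ℚ) * w k = N := by
      simp [hc, mul_assoc, inv_mul_cancel₀ (hw _).ne', ← Finset.mul_sum, hq_sum]
    refine ⟨c, ?_, ?_⟩
    · rintro rfl
      exact hN (by simpa using htotal.symm)
    · rw [htotal]
      simp only [hc, Finset.smul_sum, smul_smul]

lemma isClosed_nlcRatios {ι : Type*} {A : κ → ι → ℚ} {w : κ → ℚ} (hw : ∀ k, 0 < w k) :
    IsClosed (nlcRatios A w) := by
  rw [nlcRatios_eq_convexHull hw]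
  exact isClosed_convexHull_rat_of_finite (Set.finite_range _)

lemma inv_sum_smul_sum_mem_nlcRatios {τ : Type*} (A : κ → E) {w : κ → ℚ} (hw : ∀ k, 0 < w k)
    (B : τ → κ) {s : Finset τ} (hs : s.Nonempty) :
    (∑ t ∈ s, w (B t))⁻¹ • ∑ t ∈ s, A (B t) ∈ nlcRatios A w := by
  have hsum : 0 < ∑ t ∈ s, w (B t) := Finset.sum_pos (fun t _ => hw (B t)) hs
  have hcenter := s.centerMass_mem_convexHull (R := ℚ) (z := fun t => (w (B t))⁻¹ • A (B t))
    (fun t _ => (hw (B t)).le) hsum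
    fun t _ => Set.mem_range_self (f := fun k => (w k)⁻¹ • A k) (B t)
  simpa only [nlcRatios_eq_convexHull hw, Finset.centerMass, smul_inv_smul₀ (hw _).ne']
    using hcenter

end NlcRatios

theorem no_nlc_ratio_implies_partial_sums_do_not_converge_general
    {κ ι : Type*} [Fintype κ] (L : ι → ℚ) (A : κ → ι → ℚ) (w : κ → ℚ)
    (hw : ∀ k, 0 < w k) (hnlc : L ∉ nlcRatios A w) (B : ℕ → κ) :
    ∃ i, ¬ Tendsto
      (fun n : ℕ =>
        ((∑ l ∈ Finset.range (n + 1), A (B l) i : ℚ) : ℝ) /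
          ((∑ l ∈ Finset.range (n + 1), w (B l) : ℚ) : ℝ))
      atTop (𝓝 (L i : ℝ)) := by
  by_contra! hconv
  let ratio (n : ℕ) : ι → ℚ :=
    (∑ l ∈ Finset.range (n + 1), w (B l))⁻¹ • ∑ l ∈ Finset.range (n + 1), A (B l)
  have hratio_mem (n : ℕ) : ratio n ∈ nlcRatios A w :=
    inv_sum_smul_sum_mem_nlcRatios A hw B (Finset.nonempty_range_iff.2 n.succ_ne_zero)
  have hratio_tendsto : Tendsto ratio atTop (𝓝 L) := by
    refine tendsto_pi_nhds.2 fun i => Rat.isEmbedding_coe_real.tendsto_nhds_iff.2 ?_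
    refine (hconv i).congr fun n => ?_
    simp [ratio, div_eq_inv_mul]
  exact hnlc ((isClosed_nlcRatios hw).mem_of_tendsto hratio_tendsto (.of_forall hratio_mem))

theorem no_nlc_ratio_implies_partial_sums_do_not_converge
    {d : ℕ} (hd : 1 ≤ d) (L : Fin d → Fin d → ℚ)
    {m : ℕ} (hm : 1 ≤ m)
    (A : Fin m → Matrix (Fin d) (Fin d) ℤ) (w : Fin m → ℕ)
    (hw : ∀ i : Fin m, 0 < w i)
    (hnlc : ¬ ∃ c : Fin m → ℕ, (∃ i : Fin m, c i ≠ 0) ∧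
      ∀ i j : Fin d,
        (∑ l : Fin m, (c l : ℚ) * (A l i j : ℚ)) =
          (∑ l : Fin m, (c l : ℚ) * (w l : ℚ)) * L i j)
    (B : ℕ → Fin m) :
    ∃ i j : Fin d,
      ¬ Tendsto
        (fun n : ℕ =>
          ((∑ l ∈ Finset.range (n + 1), A (B l) i j : ℤ) : ℝ) /
            ((∑ l ∈ Finset.range (n + 1), w (B l) : ℕ) : ℝ))
        atTop (𝓝 ((L i j : ℚ) : ℝ)) := by
  have hL : (fun ij : Fin d × Fin d => L ij.1 ij.2) ∉
      nlcRatios (fun l ij => (A l ij.1 ij.2 : ℚ)) (fun l => (w l : ℚ)) := fun ⟨c, hc, h⟩ =>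
    hnlc ⟨c, Function.ne_iff.1 hc, fun i j => by simpa using congrFun h (i, j)⟩
  simpa using no_nlc_ratio_implies_partial_sums_do_not_converge_general _ _ _
    (fun l => Nat.cast_pos.2 (hw l)) hL B
end

section
/- Let {a_n}_{n≥1} be a sequence of integers, let c, c', c'' ∈ ℤ and k ∈ ℤ with k ≥ 1, and let {x_i}_{i≥1} be a strictly increasing sequence of positive integers such that (i) x_1 = 1, (ii) x_{i+2} − x_{i+1} = x_{i+1} − x_i + k for all i ≥ 1, and (iii) for all i ≥ 1: c + c'·i + min{a_n : x_i ≤ n < x_{i+1}} ≤ min{a_n : x_{i+1} ≤ n < x_{i+2}} and max{a_n : x_{i+1} ≤ n < x_{i+2}} ≤ c'' + c'·i + max{a_n : x_i ≤ n < x_{i+1}}. Then a_n/n converges to c'/k as n → ∞. -/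
open Filter Topology

/-!
Summing the recursions over the blocks, the minimum of `a` on the `i`-th block `[x i, x (i + 1))` is
at least `c' / 2 * i ^ 2 + O(i)` and the maximum is at most `c' / 2 * i ^ 2 + O(i)`, while
`x i = K / 2 * i ^ 2 + O(i)`. In particular `x (i + 1) / x i → 1`, so on the `i`-th block the
denominator of `a n / n` may be replaced by `x i`, and the quotient is squeezed to `c' / K`.
-/

section QuadraticSequence

/-- The sequence with initial term `u` whose consecutive differences are the arithmetic progression
`b, b + c, b + 2 * c, …`. The binomial (Newton) form avoids dividing by `2`. -/
def quadSeq {R : Type*} [CommRing R] (u b c : R) (n : ℕ) : R :=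
  u + b * n + c * n.choose 2

section Algebra

variable {R : Type*} [CommRing R]

@[simp]
lemma quadSeq_zero (u b c : R) : quadSeq u b c 0 = u := by
  simp [quadSeq]

lemma quadSeq_succ (u b c : R) (n : ℕ) :
    quadSeq u b c (n + 1) = quadSeq u b c n + (b + c * n) := by
  simp only [quadSeq, Nat.choose_succ_succ' n 1, Nat.choose_one_right, Nat.cast_add, Nat.cast_one]
  ring

lemma eq_quadSeq_of_sub_eq_sub_add {x : ℕ → R} {K : R}
    (h : ∀ i, x (i + 2) - x (i + 1) = x (i + 1) - x i + K) :
    x = quadSeq (x 0) (x 1 - x 0) K := by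
  funext i
  induction i using Nat.twoStepInduction with
  | zero => simp
  | one => simp [quadSeq]
  | more i ih ih_succ =>
    have hq := quadSeq_succ (x 0) (x 1 - x 0) K i
    rw [quadSeq_succ] at ih_succ
    simp only [quadSeq_succ, Nat.cast_add, Nat.cast_one]
    linear_combination h i + 2 * ih_succ - ih

variable [PartialOrder R] [IsOrderedAddMonoid R] {s : ℕ → R} {b c : R}

lemma le_quadSeq_of_succ_le (h : ∀ i, s (i + 1) ≤ s i + (b + c * i)) (i : ℕ) :
    s i ≤ quadSeq (s 0) b c i := by
  induction i with
  | zero => simp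
  | succ i ih =>
    rw [quadSeq_succ]
    exact (h i).trans (by gcongr)

lemma quadSeq_le_of_le_succ (h : ∀ i, s i + (b + c * i) ≤ s (i + 1)) (i : ℕ) :
    quadSeq (s 0) b c i ≤ s i := by
  induction i with
  | zero => simp
  | succ i ih =>
    rw [quadSeq_succ]
    exact le_trans (by gcongr) (h i)

end Algebra

lemma tendsto_quadSeq_div_sq (u b c : ℝ) :
    Tendsto (fun n : ℕ => quadSeq u b c n / (n : ℝ) ^ 2) atTop (𝓝 (c / 2)) := by
  have h_inv : Tendsto (fun n : ℕ => (n : ℝ)⁻¹) atTop (𝓝 0) := tendsto_inv_atTop_nhds_zero_nat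
  have h_poly : Tendsto (fun n : ℕ => u * (n : ℝ)⁻¹ ^ 2 + (b - c / 2) * (n : ℝ)⁻¹ + c / 2) atTop
      (𝓝 (c / 2)) := by
    simpa using (((h_inv.pow 2).const_mul u).add (h_inv.const_mul (b - c / 2))).add_const (c / 2)
  refine h_poly.congr' ?_
  filter_upwards [eventually_ne_atTop 0] with n hn
  rw [quadSeq, Nat.cast_choose_two]
  field_simp
  ring

lemma tendsto_quadSeq_div_quadSeq (u b c u' b' : ℝ) {c' : ℝ} (hc' : c' ≠ 0) :
    Tendsto (fun n => quadSeq u b c n / quadSeq u' b' c' n) atTop (𝓝 (c / c')) := by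
  have h := (tendsto_quadSeq_div_sq u b c).div (tendsto_quadSeq_div_sq u' b' c')
    (div_ne_zero hc' two_ne_zero)
  rw [div_div_div_cancel_right₀ two_ne_zero] at h
  refine h.congr' ?_
  filter_upwards [eventually_ne_atTop 0] with n hn
  exact div_div_div_cancel_right₀ (by positivity) _ _

lemma tendsto_quadSeq_atTop (u b : ℝ) {c : ℝ} (hc : 0 < c) :
    Tendsto (quadSeq u b c) atTop atTop := by
  have h_sq : Tendsto (fun n : ℕ => (n : ℝ) ^ 2) atTop atTop :=
    (tendsto_pow_atTop two_ne_zero).comp tendsto_natCast_atTop_atTop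
  refine ((tendsto_quadSeq_div_sq u b c).pos_mul_atTop (half_pos hc) h_sq).congr' ?_
  filter_upwards [eventually_ne_atTop 0] with n hn
  exact div_mul_cancel₀ _ (by positivity)

end QuadraticSequence

section Blocks

lemma exists_tendsto_atTop_mem_Ico_succ {α : Type*} [LinearOrder α] [NoMaxOrder α] {x : ℕ → α}
    (hx : Tendsto x atTop atTop) :
    ∃ i : α → ℕ, Tendsto i atTop atTop ∧
      ∀ᶠ t in atTop, t ∈ Set.Ico (x (i t)) (x (i t + 1)) := by
  have h_exists : ∀ t, ∃ i, x 0 ≤ t → t ∈ Set.Ico (x i) (x (i + 1)) := by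
    intro t
    by_contra! h
    have h_le : ∀ i, x i ≤ t := fun i => by
      induction i with
      | zero => exact (h 0).1
      | succ i ih => exact not_lt.1 fun hlt => (h i).2 ⟨ih, hlt⟩
    obtain ⟨i, hi⟩ := (hx.eventually_gt_atTop t).exists
    exact (h_le i).not_gt hi
  choose i hi using h_exists
  have h_mem : ∀ᶠ t in atTop, t ∈ Set.Ico (x (i t)) (x (i t + 1)) :=
    (eventually_ge_atTop (x 0)).mono hi
  refine ⟨i, tendsto_atTop.2 fun b => ?_, h_mem⟩
  have h_ge : ∀ᶠ t in atTop, ∀ j ∈ Set.Iic b, x j ≤ t :=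
    (Set.finite_Iic b).eventually_all.2 fun j _ => eventually_ge_atTop (x j)
  filter_upwards [h_mem, h_ge] with t ht hge
  by_contra! hlt
  exact (hge _ hlt).not_gt ht.2

variable {x a lo hi : ℕ → ℝ}

lemma tendsto_div_of_le_of_le_on_blocks {ℓ : ℝ} (hx : Tendsto x atTop atTop)
    (hx_ratio : Tendsto (fun i => x (i + 1) / x i) atTop (𝓝 1))
    (hlo : ∀ i n : ℕ, (n : ℝ) ∈ Set.Ico (x i) (x (i + 1)) → lo i ≤ a n)
    (hhi : ∀ i n : ℕ, (n : ℝ) ∈ Set.Ico (x i) (x (i + 1)) → a n ≤ hi i)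
    (hlo_lim : Tendsto (fun i => lo i / x i) atTop (𝓝 ℓ))
    (hhi_lim : Tendsto (fun i => hi i / x i) atTop (𝓝 ℓ)) :
    Tendsto (fun n => a n / n) atTop (𝓝 ℓ) := by
  obtain ⟨index, h_index, h_mem⟩ := exists_tendsto_atTop_mem_Ico_succ hx
  let k : ℕ → ℕ := fun n => index n
  have hk : Tendsto k atTop atTop := h_index.comp tendsto_natCast_atTop_atTop
  have hk_mem : ∀ᶠ n : ℕ in atTop, (n : ℝ) ∈ Set.Ico (x (k n)) (x (k n + 1)) :=
    tendsto_natCast_atTop_atTop.eventually h_mem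
  have hk_pos : ∀ᶠ n in atTop, 0 < x (k n) := (hx.comp hk).eventually_gt_atTop 0
  have h_num : Tendsto (fun n => a n / x (k n)) atTop (𝓝 ℓ) := by
    refine tendsto_of_tendsto_of_tendsto_of_le_of_le' (hlo_lim.comp hk) (hhi_lim.comp hk) ?_ ?_
    · filter_upwards [hk_mem, hk_pos] with n hn hpos
      exact div_le_div_of_nonneg_right (hlo _ _ hn) hpos.le
    · filter_upwards [hk_mem, hk_pos] with n hn hpos
      exact div_le_div_of_nonneg_right (hhi _ _ hn) hpos.le
  have h_den : Tendsto (fun n : ℕ => n / x (k n)) atTop (𝓝 1) := by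
    refine tendsto_of_tendsto_of_tendsto_of_le_of_le' tendsto_const_nhds (hx_ratio.comp hk) ?_ ?_
    · filter_upwards [hk_mem, hk_pos] with n hn hpos
      exact (one_le_div hpos).2 hn.1
    · filter_upwards [hk_mem, hk_pos] with n hn hpos
      exact div_le_div_of_nonneg_right hn.2.le hpos.le
  have h_quot := h_num.div h_den one_ne_zero
  rw [div_one] at h_quot
  refine h_quot.congr' ?_
  filter_upwards [hk_pos] with n hpos
  exact div_div_div_cancel_right₀ hpos.ne' _ _

theorem tendsto_of_quadratic_block_growth_general {c c' c'' K : ℝ} (hK : 0 < K)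
    (hstep : ∀ i, x (i + 2) - x (i + 1) = x (i + 1) - x i + K)
    (hlo : ∀ i n : ℕ, (n : ℝ) ∈ Set.Ico (x i) (x (i + 1)) → lo i ≤ a n)
    (hhi : ∀ i n : ℕ, (n : ℝ) ∈ Set.Ico (x i) (x (i + 1)) → a n ≤ hi i)
    (hlo_succ : ∀ i, lo i + (c + c' * i) ≤ lo (i + 1))
    (hhi_succ : ∀ i, hi (i + 1) ≤ hi i + (c'' + c' * i)) :
    Tendsto (fun n => a n / n) atTop (𝓝 (c' / K)) := by
  have hx := eq_quadSeq_of_sub_eq_sub_add hstep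
  have hx_succ := eq_quadSeq_of_sub_eq_sub_add (x := fun i => x (i + 1)) fun i => hstep (i + 1)
  have hx_ratio : Tendsto (fun i => x (i + 1) / x i) atTop (𝓝 1) := by
    rw [← div_self hK.ne']
    convert tendsto_quadSeq_div_quadSeq _ _ K _ _ hK.ne' using 3 with i
    exacts [congrFun hx_succ i, congrFun hx i]
  refine tendsto_div_of_le_of_le_on_blocks (hx ▸ tendsto_quadSeq_atTop _ _ hK) hx_ratio
    (fun i n hn => (quadSeq_le_of_le_succ hlo_succ i).trans (hlo i n hn))
    (fun i n hn => (hhi i n hn).trans (le_quadSeq_of_succ_le hhi_succ i)) ?_ ?_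
  all_goals
    rw [hx]
    exact tendsto_quadSeq_div_quadSeq _ _ _ _ _ hK.ne'

end Blocks

theorem tendsto_of_quadratic_block_growth
    (a : ℕ → ℤ) (c c' c'' K : ℤ) (hK : 1 ≤ K)
    (x : ℕ → ℕ)
    (hpos : ∀ i : ℕ, 1 ≤ i → 1 ≤ x i)
    (hmono : ∀ i : ℕ, 1 ≤ i → x i < x (i + 1))
    (hx1 : x 1 = 1)
    (hstep : ∀ i : ℕ, 1 ≤ i →
      (x (i + 2) : ℤ) - (x (i + 1) : ℤ) = (x (i + 1) : ℤ) - (x i : ℤ) + K)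
    (hmin : ∀ (i : ℕ) (hi : 1 ≤ i),
      c + c' * (i : ℤ) +
          (Finset.Ico (x i) (x (i + 1))).inf'
            (Finset.nonempty_Ico.mpr (hmono i hi)) a ≤
        (Finset.Ico (x (i + 1)) (x (i + 2))).inf'
          (Finset.nonempty_Ico.mpr (hmono (i + 1) (by omega))) a)
    (hmax : ∀ (i : ℕ) (hi : 1 ≤ i),
      (Finset.Ico (x (i + 1)) (x (i + 2))).sup'
          (Finset.nonempty_Ico.mpr (hmono (i + 1) (by omega))) a ≤
        c'' + c' * (i : ℤ) +
          (Finset.Ico (x i) (x (i + 1))).sup'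
            (Finset.nonempty_Ico.mpr (hmono i hi)) a) :
    Tendsto (fun n : ℕ => (a n : ℝ) / (n : ℝ)) atTop (𝓝 ((c' : ℝ) / (K : ℝ))) := by
  have hne (i : ℕ) : (Finset.Ico (x (i + 1)) (x (i + 2))).Nonempty :=
    Finset.nonempty_Ico.mpr (hmono (i + 1) i.succ_pos)
  let blockMin (i : ℕ) : ℤ := (Finset.Ico (x (i + 1)) (x (i + 2))).inf' (hne i) a
  let blockMax (i : ℕ) : ℤ := (Finset.Ico (x (i + 1)) (x (i + 2))).sup' (hne i) a
  have hmin_succ (i : ℕ) : blockMin i + (c + c' + c' * i) ≤ blockMin (i + 1) := by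
    linear_combination hmin (i + 1) i.succ_pos - c' * Nat.cast_succ (R := ℤ) i
  have hmax_succ (i : ℕ) : blockMax (i + 1) ≤ blockMax i + (c'' + c' + c' * i) := by
    linear_combination hmax (i + 1) i.succ_pos + c' * Nat.cast_succ (R := ℤ) i
  exact tendsto_of_quadratic_block_growth_general (x := fun i => x (i + 1))
    (lo := fun i => blockMin i) (hi := fun i => blockMax i) (c := c + c') (c'' := c'' + c')
    (mod_cast hK) (fun i => mod_cast hstep (i + 1) i.succ_pos)
    (fun i n hn => mod_cast Finset.inf'_le a (by simpa using hn))
    (fun i n hn => mod_cast Finset.le_sup' a (by simpa using hn))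
    (fun i => mod_cast hmin_succ i) (fun i => mod_cast hmax_succ i)
end

section
/- Let G be a k-colored graph containing a nonempty finite connected set of simple loops having a natural linear combination with ratio L : Fin k → Fin k → ℝ. Then there exists an infinite path ρ in G with color limit L. -/
variable {V : Type} [Fintype V] [DecidableEq V] {k : ℕ}

/-- An infinite path in the `k`-colored graph with edge set `E`. -/
def IsInfPath (E : Finset (V × Fin k × V)) (p : ℕ → V × Fin k × V) : Prop :=
  ∀ i : ℕ, p i ∈ E ∧ (p i).2.2 = (p (i + 1)).1

/-- Number of edges of color `a` among the first `n` edges of `p`. -/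
def cntP (p : ℕ → V × Fin k × V) (a : Fin k) (n : ℕ) : ℕ :=
  ((Finset.range n).filter fun i => (p i).2.1 = a).card

/-- `diff_{a,b}(p^{≤n})`. -/
def diffP (p : ℕ → V × Fin k × V) (a b : Fin k) (n : ℕ) : ℤ :=
  (cntP p a n : ℤ) - (cntP p b n : ℤ)

/-- The infinite path `p` has color limit `L`. -/
def HasColorLimitP (p : ℕ → V × Fin k × V) (L : Fin k → Fin k → ℝ) : Prop :=
  ∀ i j : Fin k,
    Filter.Tendsto (fun n : ℕ => (diffP p i j n : ℝ) / (n : ℝ))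
      Filter.atTop (nhds (L i j))

/-- A finite path in the graph, as a list of edges. -/
def IsFinPath (E : Finset (V × Fin k × V)) (σ : List (V × Fin k × V)) : Prop :=
  (∀ e ∈ σ, e ∈ E) ∧ List.Chain' (fun e f => e.2.2 = f.1) σ

/-- A simple loop: a nonempty finite path whose first node equals its last
node and whose sources (i.e., all visited nodes except the repeated final one)
are pairwise distinct. -/
def IsSimpleLoop (E : Finset (V × Fin k × V)) (σ : List (V × Fin k × V)) : Prop :=
  IsFinPath E σ ∧ σ ≠ [] ∧
    σ.head?.map Prod.fst = σ.getLast?.map (fun e => e.2.2) ∧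
    (σ.map Prod.fst).Nodup

/-- `diff_{a,b}` of a finite path. -/
def diffL (σ : List (V × Fin k × V)) (a b : Fin k) : ℤ :=
  (σ.countP (fun e => decide (e.2.1 = a)) : ℤ) -
    (σ.countP (fun e => decide (e.2.1 = b)) : ℤ)

/-- Reachability along edges of the graph. -/
def Reach (E : Finset (V × Fin k × V)) : V → V → Prop :=
  Relation.ReflTransGen fun u v => ∃ c : Fin k, (u, c, v) ∈ E

/-- A set of loops is connected if the nodes of any two of its loops are
mutually reachable in the graph. -/
def ConnectedLoops (E : Finset (V × Fin k × V))
    (𝓛 : Finset (List (V × Fin k × V))) : Prop :=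
  ∀ σ ∈ 𝓛, ∀ σ' ∈ 𝓛, ∀ e ∈ σ, ∀ e' ∈ σ',
    Reach E (Prod.fst e) (Prod.fst e') ∧ Reach E (Prod.fst e') (Prod.fst e)

/-- The finite set of loops `𝓛` has a natural linear combination with ratio
`L`: there are natural coefficients, not all zero, with
`Σ c σ • diff σ = (Σ c σ • |σ|) • L` entrywise. -/
def HasNLCRatio (𝓛 : Finset (List (V × Fin k × V)))
    (L : Fin k → Fin k → ℝ) : Prop :=
  ∃ c : List (V × Fin k × V) → ℕ, (∃ σ ∈ 𝓛, c σ ≠ 0) ∧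
    ∀ a b : Fin k,
      (∑ σ ∈ 𝓛, (c σ : ℝ) * (diffL σ a b : ℝ)) =
        (∑ σ ∈ 𝓛, (c σ : ℝ) * (σ.length : ℝ)) * L a b

/-!
All loops can be visited by a closed walk through one fixed node, and such a tour may go around each
loop `σ` any multiple `r * c σ` of times before moving on. As a multiset of edges the tour is
`Q + r • D`, where `Q` collects the connecting paths and `D` is the natural linear combination
itself. Concatenate tours with `r = 1, 3, 5, …`: after `m` of them the path has traversed exactly
`m • Q + m ^ 2 • D`, so the connecting paths become negligible and the frequency of color `a` tends
to `|D|_a / |D|` along these times. Consecutive times have ratio tending to `1` and color counts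
are monotone, so the frequencies converge along all times.
-/

open Filter Topology

section Frequency

theorem tendsto_linear_add_sq_div (a b c : ℝ) {d : ℝ} (hd : d ≠ 0) :
    Tendsto (fun m : ℕ => (m * a + m ^ 2 * b) / (m * c + m ^ 2 * d)) atTop (𝓝 (b / d)) := by
  have key : Tendsto (fun m : ℕ => (a / m + b) / (c / m + d)) atTop (𝓝 ((0 + b) / (0 + d))) :=
    ((tendsto_const_div_atTop_nhds_zero_nat a).add_const b).div
      ((tendsto_const_div_atTop_nhds_zero_nat c).add_const d) (by simpa using hd)
  rw [zero_add, zero_add] at key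
  refine key.congr' ?_
  filter_upwards [eventually_ne_atTop 0] with m hm
  have hm' : (m : ℝ) ≠ 0 := mod_cast hm
  rw [← mul_div_mul_left _ _ (pow_ne_zero 2 hm')]
  congr 1 <;> field_simp

theorem eventually_linear_add_sq_succ_le {a b r : ℝ} (ha : 0 ≤ a) (hb : 0 ≤ b) (hr : 1 < r) :
    ∀ᶠ m : ℕ in atTop, (m + 1) * a + (m + 1) ^ 2 * b ≤ r * (m * a + m ^ 2 * b) := by
  have key : Tendsto (fun m : ℕ => (1 + 1 / (m : ℝ)) ^ 2) atTop (𝓝 1) := by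
    simpa using (tendsto_one_div_atTop_nhds_zero_nat.const_add (1 : ℝ)).pow 2
  filter_upwards [key.eventually_le_const hr, eventually_gt_atTop 0] with m hmr hm
  have hm' : (0 : ℝ) < m := mod_cast hm
  calc (m + 1) * a + (m + 1) ^ 2 * b
      ≤ (m + 1) * a * ((m + 1) / m) + (m + 1) ^ 2 * b := by
        gcongr ?_ + _
        exact le_mul_of_one_le_right (by positivity) ((one_le_div hm').2 (lt_add_one _).le)
    _ = (1 + 1 / m) ^ 2 * (m * a + m ^ 2 * b) := by field_simp
    _ ≤ r * (m * a + m ^ 2 * b) := by gcongr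

theorem tendsto_count_div_of_map_range_eq {α : Type*} {p : ℕ → α} {Q D : Multiset α} (hD : D ≠ 0)
    (hp : ∀ m : ℕ, ∃ n, (Multiset.range n).map p = m • Q + m ^ 2 • D)
    (P : α → Prop) [DecidablePred P] :
    Tendsto (fun n : ℕ => (Nat.count (fun i => P (p i)) n : ℝ) / n) atTop
      (𝓝 (D.countP P / D.card)) := by
  choose T hT using hp
  have hT_card (m : ℕ) : T m = m * Q.card + m ^ 2 * D.card := by
    simpa using congrArg Multiset.card (hT m)
  have hT_count (m : ℕ) :
      Nat.count (fun i => P (p i)) (T m) = m * Q.countP P + m ^ 2 * D.countP P := by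
    have := congrArg (Multiset.countP P) (hT m)
    rwa [Multiset.countP_add, Multiset.countP_nsmul, Multiset.countP_nsmul,
      Multiset.countP_map, ← Finset.range_val, ← Finset.filter_val, Finset.card_val,
      ← Nat.count_eq_card_filter_range] at this
  have hD_pos : 0 < D.card := Multiset.card_pos.2 hD
  refine tendsto_div_of_monotone_of_exists_subseq_tendsto_div _ _
    (Nat.mono_cast.comp (Nat.count_monotone _)) fun r hr => ⟨T, ?_, ?_, ?_⟩
  · simp only [hT_card]
    push_cast
    exact eventually_linear_add_sq_succ_le (Nat.cast_nonneg _) (Nat.cast_nonneg _) hr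
  · refine tendsto_atTop_mono (fun m => ?_) tendsto_id
    rw [hT_card, id]
    nlinarith [Nat.le_self_pow two_ne_zero m]
  · simp only [hT_count]
    simp only [hT_card]
    push_cast
    exact tendsto_linear_add_sq_div _ _ _ (Nat.cast_ne_zero.2 hD_pos.ne')

end Frequency

theorem exists_map_range_eq_of_prefix {α : Type*} {ℓ : ℕ → List α}
    (hprefix : ∀ m, ℓ m <+: ℓ (m + 1)) (hlen : ∀ m, m ≤ (ℓ m).length) :
    ∃ p : ℕ → α, ∀ m, (List.range (ℓ m).length).map p = ℓ m := by
  have hmono {m n : ℕ} (hmn : m ≤ n) : ℓ m <+: ℓ n :=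
    Nat.le_induction List.prefix_rfl (fun n _ ih => ih.trans (hprefix n)) n hmn
  refine ⟨fun i => (ℓ (i + 1))[i]'(hlen (i + 1)), fun m => ?_⟩
  refine List.ext_getElem (by simp) fun i _ hi => ?_
  rw [List.getElem_map, List.getElem_range]
  rcases le_total m (i + 1) with h | h
  · exact ((hmono h).getElem hi).symm
  · exact (hmono h).getElem (hlen (i + 1))

section Walks

omit [Fintype V] [DecidableEq V]

variable {E : Finset (V × Fin k × V)} {σ τ : List (V × Fin k × V)} {u v w : V}

/-- `IsWalk E u σ v`: the edges `σ` form a finite path of the graph from `u` to `v`. Unlike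
`IsFinPath` this records the endpoints, so that the empty path is a walk from each node to itself
only. -/
def IsWalk (E : Finset (V × Fin k × V)) : V → List (V × Fin k × V) → V → Prop
  | u, [], v => u = v
  | u, e :: σ, v => e ∈ E ∧ e.1 = u ∧ IsWalk E e.2.2 σ v

/-- A loop: a finite path of positive length that ends where it starts, possibly visiting nodes
several times. -/
def IsLoop (E : Finset (V × Fin k × V)) (σ : List (V × Fin k × V)) : Prop :=
  IsFinPath E σ ∧ σ ≠ [] ∧ σ.head?.map Prod.fst = σ.getLast?.map (fun e => e.2.2)

theorem isFinPath_iff :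
    IsFinPath E σ ↔ (∀ e ∈ σ, e ∈ E) ∧ List.IsChain (fun e f => e.2.2 = f.1) σ :=
  Iff.rfl

theorem IsSimpleLoop.isLoop (h : IsSimpleLoop E σ) : IsLoop E σ :=
  ⟨h.1, h.2.1, h.2.2.1⟩

theorem IsWalk.append (hσ : IsWalk E u σ v) (hτ : IsWalk E v τ w) : IsWalk E u (σ ++ τ) w := by
  induction σ generalizing u with
  | nil => exact hσ ▸ hτ
  | cons e σ ih => exact ⟨hσ.1, hσ.2.1, ih hσ.2.2⟩

theorem isWalk_cons_iff {e : V × Fin k × V} :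
    IsWalk E u (e :: σ) v ↔
      IsFinPath E (e :: σ) ∧ e.1 = u ∧ ((e :: σ).getLast (List.cons_ne_nil e σ)).2.2 = v := by
  induction σ generalizing u e with
  | nil => simp [IsWalk, isFinPath_iff]
  | cons f σ ih =>
    rw [IsWalk, ih]
    simp only [isFinPath_iff, List.forall_mem_cons, List.isChain_cons_cons, List.getLast_cons_cons]
    rw [eq_comm (a := f.1)]
    tauto

theorem IsWalk.isFinPath (h : IsWalk E u σ v) : IsFinPath E σ := by
  cases σ with
  | nil => simp [isFinPath_iff]
  | cons e σ => exact (isWalk_cons_iff.1 h).1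

theorem IsLoop.exists_isWalk (h : IsLoop E σ) : ∃ e ∈ σ, IsWalk E e.1 σ e.1 := by
  obtain ⟨hpath, hne, hclosed⟩ := h
  cases σ with
  | nil => exact absurd rfl hne
  | cons e σ =>
    rw [List.head?_cons, List.getLast?_eq_some_getLast (List.cons_ne_nil e σ), Option.map_some,
      Option.map_some, Option.some_inj] at hclosed
    exact ⟨e, List.mem_cons_self, isWalk_cons_iff.2 ⟨hpath, rfl, hclosed.symm⟩⟩

theorem Reach.exists_isWalk (h : Reach E u v) : ∃ σ, IsWalk E u σ v := by
  induction h with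
  | refl => exact ⟨[], rfl⟩
  | @tail v w _ hvw ih =>
    obtain ⟨σ, hσ⟩ := ih
    obtain ⟨a, ha⟩ := hvw
    exact ⟨σ ++ [(v, a, w)], hσ.append ⟨ha, rfl, rfl⟩⟩

theorem IsWalk.exists_nsmul (h : IsWalk E u σ u) (n : ℕ) :
    ∃ τ, IsWalk E u τ u ∧ (τ : Multiset (V × Fin k × V)) = n • (σ : Multiset (V × Fin k × V)) := by
  induction n with
  | zero => exact ⟨[], rfl, by simp⟩
  | succ n ih =>
    obtain ⟨τ, hτ, hτσ⟩ := ih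
    exact ⟨τ ++ σ, hτ.append h, by rw [← Multiset.coe_add, hτσ, succ_nsmul]⟩

/-- The edges of the natural linear combination of the loops `σ ∈ 𝓛` with coefficients `c σ`,
counted with multiplicity: its weight is the cardinality, and its value is read off from the number
of edges of each color. -/
def combination {α : Type*} (𝓛 : Finset (List α)) (c : List α → ℕ) : Multiset α :=
  ∑ σ ∈ 𝓛, c σ • (σ : Multiset α)

theorem exists_isWalk_coe_eq_add_nsmul_combination (v : V) (𝓛 : Finset (List (V × Fin k × V)))
    (c : List (V × Fin k × V) → ℕ)
    (h : ∀ σ ∈ 𝓛, ∃ u, IsWalk E u σ u ∧ Reach E v u ∧ Reach E u v) :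
    ∃ Q : Multiset (V × Fin k × V), ∀ r : ℕ, ∃ τ : List (V × Fin k × V),
      IsWalk E v τ v ∧ (τ : Multiset (V × Fin k × V)) = Q + r • combination 𝓛 c := by
  induction 𝓛 using Finset.cons_induction with
  | empty => exact ⟨0, fun _ => ⟨[], rfl, by simp [combination]⟩⟩
  | cons σ 𝓛 hσ ih =>
    obtain ⟨⟨u, hloop, hvu, huv⟩, hrest⟩ := (Finset.forall_mem_cons hσ _).1 h
    obtain ⟨Q, hQ⟩ := ih hrest
    obtain ⟨there, h_there⟩ := hvu.exists_isWalk
    obtain ⟨back, h_back⟩ := huv.exists_isWalk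
    refine ⟨there + back + Q, fun r => ?_⟩
    obtain ⟨around, h_around, h_around_eq⟩ := hloop.exists_nsmul (r * c σ)
    obtain ⟨τ, hτ, hτ_eq⟩ := hQ r
    refine ⟨there ++ around ++ back ++ τ, ((h_there.append h_around).append h_back).append hτ, ?_⟩
    simp only [← Multiset.coe_add, h_around_eq, hτ_eq, combination, Finset.sum_cons, smul_add,
      mul_smul]
    abel

theorem isInfPath_of_forall_exists_isFinPath {p : ℕ → V × Fin k × V}
    (h : ∀ n, ∃ m ≥ n, IsFinPath E ((List.range m).map p)) : IsInfPath E p := by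
  intro i
  obtain ⟨m, hm, hpath⟩ := h (i + 2)
  obtain ⟨hmem, hchain⟩ := isFinPath_iff.1 hpath
  refine ⟨hmem _ (List.mem_map_of_mem (List.mem_range.2 (by lia))), ?_⟩
  rw [List.isChain_map, List.isChain_range] at hchain
  exact hchain i (by lia)

theorem exists_isInfPath_map_range_eq {Q D : Multiset (V × Fin k × V)} (hD : D ≠ 0)
    (h : ∀ r : ℕ, ∃ τ : List (V × Fin k × V),
      IsWalk E v τ v ∧ (τ : Multiset (V × Fin k × V)) = Q + r • D) :
    ∃ p, IsInfPath E p ∧ ∀ m : ℕ, ∃ n, (Multiset.range n).map p = m • Q + m ^ 2 • D := by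
  choose τ hτ hτ_eq using h
  -- Odd numbers of rounds, because the first `m` of them add up to `m ^ 2`.
  let ℓ (m : ℕ) := (List.range m).flatMap fun i => τ (2 * i + 1)
  have hℓ_succ (m : ℕ) : ℓ (m + 1) = ℓ m ++ τ (2 * m + 1) := by simp [ℓ, List.range_succ]
  have hℓ_walk (m : ℕ) : IsWalk E v (ℓ m) v := by
    induction m with
    | zero => exact rfl
    | succ m ih => exact hℓ_succ m ▸ ih.append (hτ _)
  have hℓ_eq (m : ℕ) : (ℓ m : Multiset (V × Fin k × V)) = m • Q + m ^ 2 • D := by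
    induction m with
    | zero => simp [ℓ]
    | succ m ih =>
      rw [hℓ_succ, ← Multiset.coe_add, ih, hτ_eq]
      module
  have hℓ_len (m : ℕ) : m ≤ (ℓ m).length := by
    have hcard : (ℓ m).length = m * Q.card + m ^ 2 * D.card := by
      simpa using congrArg Multiset.card (hℓ_eq m)
    nlinarith [Nat.le_self_pow two_ne_zero m, Multiset.card_pos.2 hD]
  obtain ⟨p, hp⟩ := exists_map_range_eq_of_prefix
    (fun m => hℓ_succ m ▸ List.prefix_append _ _) hℓ_len
  refine ⟨p, isInfPath_of_forall_exists_isFinPath fun n => ⟨_, hℓ_len n, ?_⟩,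
    fun m => ⟨(ℓ m).length, ?_⟩⟩
  · exact (hp n).symm ▸ (hℓ_walk n).isFinPath
  · rw [← hℓ_eq, ← hp m]
    simp [Multiset.range]

theorem HasNLCRatio.exists_combination {𝓛 : Finset (List (V × Fin k × V))}
    {L : Fin k → Fin k → ℝ} (h : HasNLCRatio 𝓛 L) (hne : ∀ σ ∈ 𝓛, σ ≠ []) :
    ∃ c, combination 𝓛 c ≠ 0 ∧ ∀ a b,
      ((combination 𝓛 c).countP (·.2.1 = a) / (combination 𝓛 c).card -
        (combination 𝓛 c).countP (·.2.1 = b) / (combination 𝓛 c).card : ℝ) = L a b := by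
  obtain ⟨c, ⟨σ, hσ, hcσ⟩, hc⟩ := h
  have hcard : (combination 𝓛 c).card = ∑ σ ∈ 𝓛, c σ * σ.length := by
    simp [combination, Multiset.card_sum]
  have hcount (a : Fin k) : (combination 𝓛 c).countP (·.2.1 = a) =
      ∑ σ ∈ 𝓛, c σ * σ.countP (·.2.1 = a) := by
    simp only [combination, ← Multiset.coe_countPAddMonoidHom, map_sum, map_nsmul]
    simp
  have hpos : 0 < (combination 𝓛 c).card := by
    rw [hcard]
    exact Finset.sum_pos' (fun _ _ => Nat.zero_le _)
      ⟨σ, hσ, Nat.mul_pos (Nat.pos_of_ne_zero hcσ) (List.length_pos_iff.2 (hne σ hσ))⟩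
  refine ⟨c, Multiset.card_pos.1 hpos, fun a b => ?_⟩
  rw [← sub_div, div_eq_iff (by positivity), mul_comm, hcard, hcount, hcount]
  push_cast
  rw [← hc a b, ← Finset.sum_sub_distrib]
  simp [diffL, mul_sub]

theorem hasColorLimitP_of_tendsto_cntP {p : ℕ → V × Fin k × V} {f : Fin k → ℝ}
    (h : ∀ a, Tendsto (fun n : ℕ => (cntP p a n : ℝ) / n) atTop (𝓝 (f a))) :
    HasColorLimitP p fun a b => f a - f b := fun a b =>
  ((h a).sub (h b)).congr fun n => by simp [diffP, sub_div]

end Walks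

theorem connected_loops_with_nlc_gives_colorLimit_path_general {V : Type} {k : ℕ}
    (E : Finset (V × Fin k × V)) (L : Fin k → Fin k → ℝ)
    (𝓛 : Finset (List (V × Fin k × V))) (hloops : ∀ σ ∈ 𝓛, IsLoop E σ)
    (hconn : ConnectedLoops E 𝓛) (hnlc : HasNLCRatio 𝓛 L) :
    ∃ p : ℕ → V × Fin k × V, IsInfPath E p ∧ HasColorLimitP p L := by
  have ⟨_, ⟨σ₀, hσ₀, _⟩, _⟩ := hnlc
  obtain ⟨c, hne, hL⟩ := hnlc.exists_combination fun σ hσ => (hloops σ hσ).2.1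
  obtain ⟨e₀, he₀, -⟩ := (hloops σ₀ hσ₀).exists_isWalk
  obtain ⟨Q, hQ⟩ := exists_isWalk_coe_eq_add_nsmul_combination e₀.1 𝓛 c fun σ hσ =>
    let ⟨e, he, hwalk⟩ := (hloops σ hσ).exists_isWalk
    ⟨e.1, hwalk, hconn σ₀ hσ₀ σ hσ e₀ he₀ e he⟩
  obtain ⟨p, hp, hp_eq⟩ := exists_isInfPath_map_range_eq hne hQ
  refine ⟨p, hp, ?_⟩
  rw [← funext₂ hL]
  refine hasColorLimitP_of_tendsto_cntP fun a => ?_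
  simpa only [cntP, Nat.count_eq_card_filter_range] using
    tendsto_count_div_of_map_range_eq hne hp_eq (·.2.1 = a)

theorem connected_loops_with_nlc_gives_colorLimit_path
    {V : Type} [Fintype V] [DecidableEq V] {k : ℕ} (hk : 1 ≤ k)
    (E : Finset (V × Fin k × V)) (L : Fin k → Fin k → ℝ)
    (𝓛 : Finset (List (V × Fin k × V))) (hne : 𝓛.Nonempty)
    (hloops : ∀ σ ∈ 𝓛, IsSimpleLoop E σ) (hconn : ConnectedLoops E 𝓛)
    (hnlc : HasNLCRatio 𝓛 L) :
    ∃ p : ℕ → V × Fin k × V, IsInfPath E p ∧ HasColorLimitP p L :=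
  connected_loops_with_nlc_gives_colorLimit_path_general E L 𝓛
    (fun σ hσ => (hloops σ hσ).isLoop) hconn hnlc
end

section
/- Consider a finite system of homogeneous linear constraints in variables x ∈ ℝ^m, where each constraint has one of the forms aᵀx = 0, aᵀx ≥ 0, or aᵀx > 0 with integer coefficient vector a ∈ ℤ^m. If the system has a real solution, then it has an integer solution, i.e., a solution x ∈ ℤ^m satisfying all constraints. -/
/-!
The coordinates of a solution `x` in an ordered abelian group generate a finitely generated ordered
group `V`. A homomorphism `V → ℤ` preserves the vanishing linear forms, so it turns `x` into an
integer solution as soon as it is positive on the finitely many values that are positive. Such a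
homomorphism exists by induction on their number: if `f` is positive on the elements `v k` but not
on the positive element `v a`, then the elements `f (v k) • v a - f (v a) • v k` are positive too,
and for `g` positive on these, `g (v a) • f - f (v a) • g` vanishes at `v a` and is positive on
every `v k`. A large multiple of it absorbs the addition of any homomorphism that is positive at
`v a`.
-/

open Filter Module

theorem exists_dual_ne_zero_of_notMem_torsion {R M : Type*} [CommRing R] [IsDomain R]
    [IsPrincipalIdealRing R] [AddCommGroup M] [Module R M] [Module.Finite R M] {a : M}
    (ha : a ∉ Submodule.torsion R M) : ∃ φ : Dual R M, φ a ≠ 0 := by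
  have ha' : (Submodule.torsion R M).mkQ a ≠ 0 := by
    rwa [Submodule.mkQ_apply, ne_eq, Submodule.Quotient.mk_eq_zero]
  obtain ⟨φ, hφ⟩ := Projective.exists_dual_ne_zero R ha'
  exact ⟨φ ∘ₗ (Submodule.torsion R M).mkQ, hφ⟩

theorem exists_forall_pos_nsmul_add {κ D : Type*} [AddCommGroup D] [PartialOrder D]
    [IsOrderedAddMonoid D] [Archimedean D] {s : Finset κ} {p : κ → D} (hp : ∀ k ∈ s, 0 < p k)
    (d : κ → D) : ∃ N : ℕ, ∀ k ∈ s, 0 < N • p k + d k := by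
  suffices ∀ᶠ N : ℕ in atTop, ∀ k ∈ s, 0 < N • p k + d k from this.exists
  refine (eventually_all_finset s).2 fun k hk => ?_
  obtain ⟨n, hn⟩ := exists_lt_nsmul (hp k hk) (-d k)
  filter_upwards [eventually_ge_atTop n] with N hN
  exact neg_lt_iff_pos_add.1 (hn.trans_le (nsmul_le_nsmul_left (hp k hk).le hN))

section OrderedGroup

variable {V : Type*} [AddCommGroup V] [PartialOrder V] [IsOrderedAddMonoid V]

theorem notMem_torsion_int_of_pos {a : V} (ha : 0 < a) : a ∉ Submodule.torsion ℤ V := by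
  rw [Submodule.mem_torsion_iff]
  rintro ⟨n, hn⟩
  exact nonZeroDivisors.coe_ne_zero n
    ((zsmul_left_strictMono ha).injective (hn.trans (zero_zsmul a).symm))

variable [Module.Finite ℤ V]

theorem exists_int_dual_pos_of_pos {a : V} (ha : 0 < a) : ∃ φ : Dual ℤ V, 0 < φ a := by
  obtain ⟨φ, hφ⟩ := exists_dual_ne_zero_of_notMem_torsion (notMem_torsion_int_of_pos ha)
  rcases hφ.lt_or_gt with hneg | hpos
  · exact ⟨-φ, neg_pos.2 hneg⟩
  · exact ⟨φ, hpos⟩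

theorem exists_int_dual_pos_of_forall_pos {κ : Type*} (s : Finset κ) (v : κ → V)
    (hv : ∀ k ∈ s, 0 < v k) : ∃ f : Dual ℤ V, ∀ k ∈ s, 0 < f (v k) := by
  induction s using Finset.cons_induction generalizing v with
  | empty => exact ⟨0, by simp⟩
  | cons a s _ ih =>
    simp only [Finset.forall_mem_cons] at hv ⊢
    obtain ⟨hva, hvs⟩ := hv
    obtain ⟨f, hf⟩ := ih v hvs
    rcases lt_or_ge 0 (f (v a)) with hfa | hfa
    · exact ⟨f, hfa, hf⟩
    have combination_pos : ∀ k ∈ s, 0 < f (v k) • v a - f (v a) • v k := fun k hk => by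
      rw [sub_eq_add_neg, ← neg_zsmul]
      exact add_pos_of_pos_of_nonneg (zsmul_pos hva (hf k hk))
        (zsmul_nonneg (hvs k hk).le (neg_nonneg.2 hfa))
    obtain ⟨g, hg⟩ := ih _ combination_pos
    let h : Dual ℤ V := g (v a) • f - f (v a) • g
    have h_apply (w : V) : h w = g (v a) * f w - f (v a) * g w := rfl
    have ha : h (v a) = 0 := by rw [h_apply]; ring
    have hs : ∀ k ∈ s, 0 < h (v k) := fun k hk => by
      simpa only [h_apply, map_sub, map_zsmul, smul_eq_mul, mul_comm (g (v a))] using hg k hk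
    obtain ⟨φ, hφ⟩ := exists_int_dual_pos_of_pos hva
    obtain ⟨N, hN⟩ := exists_forall_pos_nsmul_add hs fun k => φ (v k)
    exact ⟨N • h + φ, by simpa [ha] using hφ, hN⟩

end OrderedGroup

theorem exists_int_dual_pos_of_map_pos {κ M G : Type*} [Finite κ] [AddCommGroup M]
    [Module.Finite ℤ M] [AddCommGroup G] [PartialOrder G] [IsOrderedAddMonoid G]
    (g : M →ₗ[ℤ] G) (v : κ → M) :
    ∃ f : Dual ℤ M, (∀ w, g w = 0 → f w = 0) ∧ ∀ k, 0 < g (v k) → 0 < f (v k) := by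
  have hpos : {k | 0 < g (v k)}.Finite := Set.toFinite _
  obtain ⟨f, hf⟩ := exists_int_dual_pos_of_forall_pos hpos.toFinset
    (fun k => g.rangeRestrict (v k)) fun k hk => hpos.mem_toFinset.1 hk
  refine ⟨f ∘ₗ g.rangeRestrict, fun w hw => ?_, fun k hk => hf k (hpos.mem_toFinset.2 hk)⟩
  have hw' : g.rangeRestrict w = 0 := Subtype.ext hw
  rw [LinearMap.comp_apply, hw', map_zero]

theorem integer_solution_of_real_solution_homogeneous_general
    {ι I J L G : Type*} [Fintype ι] [Finite J] [Finite L]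
    [AddCommGroup G] [PartialOrder G] [IsOrderedAddMonoid G]
    (A : I → ι → ℤ) (B : J → ι → ℤ) (C : L → ι → ℤ)
    (h : ∃ x : ι → G,
      (∀ i, ∑ t, A i t • x t = 0) ∧
      (∀ j, 0 ≤ ∑ t, B j t • x t) ∧
      (∀ l, 0 < ∑ t, C l t • x t)) :
    ∃ x : ι → ℤ,
      (∀ i, ∑ t, A i t * x t = 0) ∧
      (∀ j, 0 ≤ ∑ t, B j t * x t) ∧
      (∀ l, 0 < ∑ t, C l t * x t) := by
  classical
  obtain ⟨x, hA, hB, hC⟩ := h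
  obtain ⟨f, hzero, hpos⟩ :=
    exists_int_dual_pos_of_map_pos (Fintype.linearCombination ℤ x) (Sum.elim B C)
  obtain ⟨z, rfl⟩ := (LinearEquiv.piRing ℤ ℤ ι ℤ).symm.surjective f
  simp only [LinearEquiv.piRing_symm_apply, smul_eq_mul] at hzero hpos
  refine ⟨z, fun i => hzero _ (hA i), fun j => ?_, fun l => hpos (.inr l) (hC l)⟩
  rcases (hB j).eq_or_lt with hj | hj
  · exact (hzero _ hj.symm).ge
  · exact (hpos (.inl j) hj).le

theorem integer_solution_of_real_solution_homogeneous
    (m : ℕ) {I J L : Type} [Fintype I] [Fintype J] [Fintype L]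
    (A : I → Fin m → ℤ) (B : J → Fin m → ℤ) (C : L → Fin m → ℤ)
    (h : ∃ x : Fin m → ℝ,
      (∀ i : I, ∑ t : Fin m, (A i t : ℝ) * x t = 0) ∧
      (∀ j : J, 0 ≤ ∑ t : Fin m, (B j t : ℝ) * x t) ∧
      (∀ l : L, 0 < ∑ t : Fin m, (C l t : ℝ) * x t)) :
    ∃ x : Fin m → ℤ,
      (∀ i : I, ∑ t : Fin m, A i t * x t = 0) ∧
      (∀ j : J, 0 ≤ ∑ t : Fin m, B j t * x t) ∧
      (∀ l : L, 0 < ∑ t : Fin m, C l t * x t) := by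
  simp only [← zsmul_eq_mul] at h
  exact integer_solution_of_real_solution_homogeneous_general A B C h
end
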